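/- arXiv:1104.5188 — 2 statements merged into one kernel-verified Lean document; each statement's English description precedes it below -/
import Mathlib

section
/- Let G be a locally compact second countable group with left Haar measure m_G, and let (F_n) be a tempered Følner sequence of measurable subsets of G with 0 < m_G(F_n) < ∞. Let T be a measurable measure-preserving action of G on a probability space (Ω, P), let X be a separable Banach space, and let φ : Ω → X be Bochner integrable. Define A_n φ(ω) := (1/m_G(F_n)) ∫_{F_n} φ(T^g ω) dm_G(g). Then there exists a Bochner integrable function ψ : Ω → X which is T-invariant (for each g ∈ G, ψ(T^g ω) = ψ(ω) for P-a.e. ω) such that A_n φ(ω) → ψ(ω) for P-a.e. ω and ∫_Ω ‖A_n φ(ω) − ψ(ω)‖ dP(ω) → 0. -/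
open Filter MeasureTheory Topology
open scoped Pointwise symmDiff ENNReal

open scoped NNReal ProbabilityTheory

/-!
The averages in question are integrals of orbits against the normalized restrictions `ν n` of Haar
measure to `F n`.

On `G` itself, thin out the sets where the averages of `f` are large, from the last index to the
first, dropping a point of the `d`-th set when a non-negligible part of its translates by `F d` is
already covered more than once on average. The remaining sets overlap at most twice, and
temperedness bounds the dropped part by a multiple of what remains: this is the weak type `(1, 1)`
maximal inequality. Applying it along orbits in large windows `F m` carries it over to `Ω`, and by
Banach's principle the functions `κ` whose averages tend to `0` form a closed subspace of
`L¹(P; X)`.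

By the Følner property this subspace contains `1_{g⁻¹ s} • x - 1_s • x`, hence every coboundary. In
the scalar `L²(P)` the orthogonal complement of the coboundaries consists of invariant functions,
so the sum of the two subspaces contains every `1_s • x` and is dense. Since `ψ` is the limit of the
averages of `ψ + κ`, one has `‖ψ‖ ≤ ‖ψ + κ‖`; therefore the sum is closed, hence everything, and
`A_n (ψ + κ) = ψ + A_n κ` tends to `ψ`.
-/

section WeakType

variable {G Ω : Type*} [MeasurableSpace G] [MeasurableSpace Ω]

/-- The maximal operator `f ↦ sup_n ∫ f (g • ·) ∂(ν n)` is of weak type `(1, 1)` on `L¹(P)` with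
constant `K`. -/
def WeakTypeMaximal [SMul G Ω] (ν : ℕ → Measure G) (P : Measure Ω) (K : ℝ≥0∞) : Prop :=
  ∀ ⦃f : Ω → ℝ≥0∞⦄, Measurable f → ∫⁻ ω, f ω ∂P ≠ ∞ → ∀ t : ℝ≥0∞,
    t * P {ω | ∃ n, t ≤ ∫⁻ g, f (g • ω) ∂ν n} ≤ K * ∫⁻ ω, f ω ∂P

lemma mul_measure_iUnion_le {P : Measure Ω} {s : ℕ → Set Ω} {t c : ℝ≥0∞}
    (h : ∀ N, t * P (⋃ n ∈ Finset.range N, s n) ≤ c) : t * P (⋃ n, s n) ≤ c := by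
  rw [measure_iUnion_eq_iSup_accumulate, ENNReal.mul_iSup]
  refine iSup_le fun N ↦ le_trans ?_ (h (N + 1))
  simp [Set.accumulate_def]

variable [SMul G Ω] [MeasurableSMul₂ G Ω]

lemma measurable_lintegral_smul (ν : Measure G) [SFinite ν] {f : Ω → ℝ≥0∞}
    (hf : Measurable f) : Measurable fun ω ↦ ∫⁻ g, f (g • ω) ∂ν :=
  Measurable.lintegral_prod_right' (f := fun p : Ω × G ↦ f (p.2 • p.1)) (by fun_prop)

lemma lintegral_lintegral_smul (ν : Measure G) [SFinite ν] (P : Measure Ω) [SFinite P]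
    [SMulInvariantMeasure G Ω P] {f : Ω → ℝ≥0∞} (hf : Measurable f) :
    ∫⁻ ω, ∫⁻ g, f (g • ω) ∂ν ∂P = ν Set.univ * ∫⁻ ω, f ω ∂P := by
  rw [lintegral_lintegral_swap (by fun_prop)]
  simp_rw [(measurePreserving_smul (_ : G) P).lintegral_comp hf, lintegral_const, mul_comm]

lemma WeakTypeMaximal.mul_measure_add_le {ν : ℕ → Measure G} [∀ n, SFinite (ν n)] {P Q : Measure Ω}
    {K : ℝ≥0∞} (hK : WeakTypeMaximal ν P K) (hQP : Q ≤ P) {u v : Ω → ℝ≥0∞} (hu : Measurable u)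
    (hv : Measurable v) (huP : ∫⁻ ω, u ω ∂P ≠ ∞) (t : ℝ≥0∞) (N : ℕ) :
    t * Q (⋃ n ∈ Finset.range N, {ω | 2 * t ≤ ∫⁻ g, u (g • ω) + v (g • ω) ∂ν n}) ≤
      K * ∫⁻ ω, u ω ∂P + ∑ n ∈ Finset.range N, ∫⁻ ω, ∫⁻ g, v (g • ω) ∂ν n ∂Q := by
  set U : Set Ω := {ω | ∃ n, t ≤ ∫⁻ g, u (g • ω) ∂ν n}
  set V : ℕ → Set Ω := fun n ↦ {ω | t ≤ ∫⁻ g, v (g • ω) ∂ν n}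
  have hcover : ⋃ n ∈ Finset.range N, {ω | 2 * t ≤ ∫⁻ g, u (g • ω) + v (g • ω) ∂ν n} ⊆
      U ∪ ⋃ n ∈ Finset.range N, V n := by
    refine Set.iUnion₂_subset fun n hn ω hω ↦ ?_
    rw [Set.mem_ofPred_eq, lintegral_add_left (by fun_prop), two_mul] at hω
    by_cases hu_small : t ≤ ∫⁻ g, u (g • ω) ∂ν n
    · exact Or.inl ⟨n, hu_small⟩
    · have hv_large : t ≤ ∫⁻ g, v (g • ω) ∂ν n := not_lt.1 fun hv_small ↦
        hω.not_gt (ENNReal.add_lt_add (not_le.1 hu_small) hv_small)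
      exact Or.inr (Set.mem_iUnion₂_of_mem hn hv_large)
  have hmarkov (n : ℕ) : t * Q (V n) ≤ ∫⁻ ω, ∫⁻ g, v (g • ω) ∂ν n ∂Q :=
    mul_meas_ge_le_lintegral (measurable_lintegral_smul _ hv) t
  calc t * Q (⋃ n ∈ Finset.range N, {ω | 2 * t ≤ ∫⁻ g, u (g • ω) + v (g • ω) ∂ν n})
      ≤ t * (Q U + ∑ n ∈ Finset.range N, Q (V n)) := by
        gcongr
        exact ((measure_mono hcover).trans (measure_union_le _ _)).trans
          (add_le_add le_rfl (measure_biUnion_finset_le _ _))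
    _ = t * Q U + ∑ n ∈ Finset.range N, t * Q (V n) := by rw [mul_add, Finset.mul_sum]
    _ ≤ _ := by
        refine add_le_add (le_trans ?_ (hK hu huP t)) (Finset.sum_le_sum fun n _ ↦ hmarkov n)
        gcongr

end WeakType

section Packing

variable {G : Type*} [Group G] [MeasurableSpace G]

/-- The proportion, in the sense of `ν`, of the translates `e • B` that contain `g`; it is the
convolution of `ν` with the indicator function of `B`. -/
noncomputable def coverage (ν : Measure G) (B : Set G) (g : G) : ℝ≥0∞ :=
  ν {e | e⁻¹ * g ∈ B}

/-- Temperedness for a sequence of measures: the left translates of `ν k` by the inverses of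
`ν d`-almost all points, `d < k`, have a common upper bound of mass at most `C`. For normalized
Haar measures on sets `F k` the bound lives on `⋃ d < k, (F d)⁻¹ * F k`. -/
def IsTempered (ν : ℕ → Measure G) (C : ℝ≥0) : Prop :=
  ∀ k, ∃ ρ : Measure G, ρ Set.univ ≤ C ∧ ∀ d < k, ∀ᵐ e ∂ν d, (ν k).map (e⁻¹ * ·) ≤ ρ

section Coverage

variable (μ ν : Measure G) {B : Set G}

lemma coverage_mul [MeasurableMul G] [MeasurableInv G] (hB : MeasurableSet B) (e h : G) :
    coverage ν B (e * h) = coverage (ν.map (e⁻¹ * ·)) B h := by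
  rw [coverage, coverage, Measure.map_apply (measurable_const_mul _)]
  · simp [mul_assoc]
  · exact measurable_inv.mul_const h hB

lemma one_le_sum_coverage_of_overloaded [MeasurableMul G] [MeasurableInv G]
    {ν ρ : ℕ → Measure G} {B : ℕ → Set G} (hB : ∀ k, MeasurableSet (B k)) {d N : ℕ}
    (hρ : ∀ k > d, ∀ᵐ e ∂ν d, (ν k).map (e⁻¹ * ·) ≤ ρ k) {h : G}
    (hload : ν d {e | 1 < ∑ k ∈ Finset.Ico (d + 1) N, coverage (ν k) (B k) (e * h)} ≠ 0) :
    1 ≤ ∑ k ∈ Finset.range N, coverage (ρ k) (B k) h := by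
  have hdom : ∀ᵐ e ∂ν d, ∀ k > d, (ν k).map (e⁻¹ * ·) ≤ ρ k :=
    ae_all_iff.2 fun k ↦ eventually_imp_distrib_left.2 (hρ k)
  obtain ⟨e, he, hle⟩ := ((frequently_ae_iff.2 hload).and_eventually hdom).exists
  calc 1 ≤ ∑ k ∈ Finset.Ico (d + 1) N, coverage (ν k) (B k) (e * h) := he.le
    _ ≤ ∑ k ∈ Finset.Ico (d + 1) N, coverage (ρ k) (B k) h := by
        refine Finset.sum_le_sum fun k hk ↦ ?_
        rw [coverage_mul _ (hB k)]
        exact hle k (Finset.mem_Ico.1 hk).1 _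
    _ ≤ ∑ k ∈ Finset.range N, coverage (ρ k) (B k) h :=
        Finset.sum_le_sum_of_subset fun k hk ↦ Finset.mem_range.2 (Finset.mem_Ico.1 hk).2

variable [MeasurableMul₂ G] [MeasurableInv G] [SFinite ν]

lemma measurable_coverage (hB : MeasurableSet B) : Measurable (coverage ν B) :=
  measurable_measure_prodMk_left (s := {p : G × G | p.2⁻¹ * p.1 ∈ B})
    ((measurable_snd.inv.mul measurable_fst) hB)

variable [SFinite μ] [μ.IsMulLeftInvariant]

lemma lintegral_mul_coverage (hB : MeasurableSet B) {u : G → ℝ≥0∞} (hu : Measurable u) :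
    ∫⁻ g, u g * coverage ν B g ∂μ = ∫⁻ h in B, ∫⁻ e, u (e * h) ∂ν ∂μ := by
  have : Measurable (B.indicator (1 : G → ℝ≥0∞)) := measurable_one.indicator hB
  have hcov (g : G) : coverage ν B g = ∫⁻ e, B.indicator 1 (e⁻¹ * g) ∂ν :=
    (lintegral_indicator_one (measurable_inv.mul_const g hB)).symm
  calc ∫⁻ g, u g * coverage ν B g ∂μ
      = ∫⁻ g, ∫⁻ e, u g * B.indicator 1 (e⁻¹ * g) ∂ν ∂μ := by
        refine lintegral_congr fun g ↦ ?_
        rw [hcov, lintegral_const_mul _ (by fun_prop)]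
    _ = ∫⁻ e, ∫⁻ g, u g * B.indicator 1 (e⁻¹ * g) ∂μ ∂ν :=
        lintegral_lintegral_swap (by fun_prop)
    _ = ∫⁻ e, ∫⁻ h, u (e * h) * B.indicator 1 h ∂μ ∂ν := by
        refine lintegral_congr fun e ↦ ?_
        rw [← lintegral_mul_left_eq_self _ e]
        simp only [inv_mul_cancel_left]
    _ = ∫⁻ h, ∫⁻ e, u (e * h) * B.indicator 1 h ∂ν ∂μ :=
        lintegral_lintegral_swap (by fun_prop)
    _ = ∫⁻ h in B, ∫⁻ e, u (e * h) ∂ν ∂μ := by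
        rw [← lintegral_indicator hB]
        refine lintegral_congr fun h ↦ ?_
        by_cases hh : h ∈ B <;> simp [hh]

lemma lintegral_coverage (hB : MeasurableSet B) :
    ∫⁻ g, coverage ν B g ∂μ = ν Set.univ * μ B := by
  simpa using lintegral_mul_coverage μ ν hB measurable_one

end Coverage

section Greedy

variable [MeasurableMul₂ G] [MeasurableInv G] (μ : Measure G) [SFinite μ] [μ.IsMulLeftInvariant]

lemma ae_add_coverage_le_two {ν : Measure G} [SFinite ν] (hν : ν Set.univ ≤ 1) {B : Set G}
    (hB : MeasurableSet B) {S : G → ℝ≥0∞} (hS : Measurable S) (hS2 : ∀ᵐ g ∂μ, S g ≤ 2)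
    (hBS : ∀ h ∈ B, ν {e | 1 < S (e * h)} = 0) : ∀ᵐ g ∂μ, S g + coverage ν B g ≤ 2 := by
  set U : Set G := {g | 1 < S g}
  have hU : MeasurableSet U := measurableSet_lt measurable_const hS
  have hUB : ∫⁻ g, U.indicator 1 g * coverage ν B g ∂μ = 0 := by
    rw [lintegral_mul_coverage μ ν hB (measurable_one.indicator hU)]
    refine (setLIntegral_congr_fun hB fun h hh ↦ ?_).trans lintegral_zero
    exact (lintegral_indicator_one (measurable_mul_const h hU)).trans (hBS h hh)
  have hUB_ae := (lintegral_eq_zero_iff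
    ((measurable_one.indicator hU).mul (measurable_coverage ν hB))).1 hUB
  filter_upwards [hS2, hUB_ae] with g hg hgU
  by_cases hc : 1 < S g
  · have : coverage ν B g = 0 := by simpa [U, hc] using hgU
    simpa [this] using hg
  · rw [← one_add_one_eq_two]
    exact add_le_add (not_lt.1 hc) ((measure_mono (Set.subset_univ _)).trans hν)

/-- The sets `B k ⊆ A k` are chosen for `k = N - 1, …, 0` in turn: a point `h` is dropped from
`A d` only if a `ν d`-nonnegligible part of its translates is already overloaded. -/
lemma exists_greedy_packing (ν : ℕ → Measure G) [∀ k, IsProbabilityMeasure (ν k)]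
    {A : ℕ → Set G} (hA : ∀ k, MeasurableSet (A k)) (N : ℕ) :
    ∃ B : ℕ → Set G, (∀ k, MeasurableSet (B k)) ∧ (∀ k, B k ⊆ A k) ∧
      (∀ᵐ g ∂μ, ∑ k ∈ Finset.range N, coverage (ν k) (B k) g ≤ 2) ∧
      ∀ d < N, ∀ h ∈ A d \ B d,
        ν d {e | 1 < ∑ k ∈ Finset.Ico (d + 1) N, coverage (ν k) (B k) (e * h)} ≠ 0 := by
  induction N generalizing ν A with
  | zero => exact ⟨A, hA, fun _ ↦ subset_rfl, by simp, by simp⟩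
  | succ N ih =>
    obtain ⟨B, hB, hBA, hB2, hdrop⟩ := ih (fun k ↦ ν (k + 1)) fun k ↦ hA (k + 1)
    set S : G → ℝ≥0∞ := fun g ↦ ∑ k ∈ Finset.range N, coverage (ν (k + 1)) (B k) g
    have hS : Measurable S :=
      Finset.measurable_fun_sum _ fun k _ ↦ measurable_coverage _ (hB k)
    set B₀ : Set G := A 0 ∩ {h | ν 0 {e | 1 < S (e * h)} = 0}
    have hB₀ : MeasurableSet B₀ := by
      refine (hA 0).inter (measurable_measure_prodMk_left (ν := ν 0)
        (s := {p : G × G | 1 < S (p.2 * p.1)}) ?_ (measurableSet_singleton 0))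
      exact measurableSet_lt measurable_const (by fun_prop)
    refine ⟨fun k ↦ k.casesOn B₀ B, fun k ↦ ?_, fun k ↦ ?_, ?_, fun d hd h hh ↦ ?_⟩
    · cases k with
      | zero => exact hB₀
      | succ k => exact hB k
    · cases k with
      | zero => exact Set.inter_subset_left
      | succ k => exact hBA k
    · simp_rw [Finset.sum_range_succ']
      exact ae_add_coverage_le_two μ prob_le_one hB₀ hS hB2 fun h hh ↦ hh.2
    · cases d with
      | zero =>
        simp_rw [Finset.sum_Ico_eq_sum_range, zero_add, Nat.add_sub_cancel, add_comm 1]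
        exact fun h0 ↦ hh.2 ⟨hh.1, h0⟩
      | succ d =>
        simp_rw [← Finset.sum_Ico_add' _ (d + 1) N 1]
        exact hdrop d (Nat.lt_of_succ_lt_succ hd) h hh

lemma sum_measure_le_of_sum_coverage_le_two {ν : ℕ → Measure G} [∀ k, SFinite (ν k)]
    {A : ℕ → Set G} {N : ℕ}
    (hA : ∀ k, MeasurableSet (A k))
    (hA2 : ∀ᵐ g ∂μ, ∑ k ∈ Finset.range N, coverage (ν k) (A k) g ≤ 2)
    {f : G → ℝ≥0∞} (hf : Measurable f) {t : ℝ≥0∞}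
    (hAt : ∀ k, ∀ h ∈ A k, t ≤ ∫⁻ e, f (e * h) ∂ν k) :
    t * ∑ k ∈ Finset.range N, μ (A k) ≤ 2 * ∫⁻ g, f g ∂μ :=
  calc t * ∑ k ∈ Finset.range N, μ (A k)
      = ∑ k ∈ Finset.range N, ∫⁻ _ in A k, t ∂μ := by simp [Finset.mul_sum]
    _ ≤ ∑ k ∈ Finset.range N, ∫⁻ h in A k, ∫⁻ e, f (e * h) ∂ν k ∂μ :=
        Finset.sum_le_sum fun k _ ↦ setLIntegral_mono' (hA k) (hAt k)
    _ = ∑ k ∈ Finset.range N, ∫⁻ g, f g * coverage (ν k) (A k) g ∂μ :=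
        Finset.sum_congr rfl fun k _ ↦ (lintegral_mul_coverage μ _ (hA k) hf).symm
    _ = ∫⁻ g, f g * ∑ k ∈ Finset.range N, coverage (ν k) (A k) g ∂μ := by
        simp_rw [Finset.mul_sum]
        exact (lintegral_finsetSum _ fun k _ ↦ hf.mul (measurable_coverage _ (hA k))).symm
    _ ≤ ∫⁻ g, 2 * f g ∂μ := by
        refine lintegral_mono_ae ?_
        filter_upwards [hA2] with g hg
        rw [mul_comm 2]
        gcongr
    _ = 2 * ∫⁻ g, f g ∂μ := lintegral_const_mul _ hf

lemma measure_biUnion_le_of_overloaded_diff {ν : ℕ → Measure G} {C : ℝ≥0}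
    (hν : IsTempered ν C) {A B : ℕ → Set G} {N : ℕ}
    (hB : ∀ k, MeasurableSet (B k))
    (hdrop : ∀ d < N, ∀ h ∈ A d \ B d,
      ν d {e | 1 < ∑ k ∈ Finset.Ico (d + 1) N, coverage (ν k) (B k) (e * h)} ≠ 0) :
    μ (⋃ d ∈ Finset.range N, A d) ≤ (1 + C) * ∑ k ∈ Finset.range N, μ (B k) := by
  choose ρ hρC hρ using hν
  have (k : ℕ) : IsFiniteMeasure (ρ k) := ⟨(hρC k).trans_lt ENNReal.coe_lt_top⟩
  set R : G → ℝ≥0∞ := fun h ↦ ∑ k ∈ Finset.range N, coverage (ρ k) (B k) h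
  have hcover : ⋃ d ∈ Finset.range N, A d ⊆ (⋃ d ∈ Finset.range N, B d) ∪ {h | 1 ≤ R h} := by
    refine Set.iUnion₂_subset fun d hd h hh ↦ ?_
    by_cases hBh : h ∈ B d
    · exact Or.inl (Set.mem_iUnion₂_of_mem hd hBh)
    · exact Or.inr <| one_le_sum_coverage_of_overloaded hB (fun k hk ↦ hρ k d hk)
        (hdrop d (Finset.mem_range.1 hd) h ⟨hh, hBh⟩)
  have hR : μ {h | 1 ≤ R h} ≤ C * ∑ k ∈ Finset.range N, μ (B k) :=
    calc μ {h | 1 ≤ R h}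
        ≤ ∫⁻ h, R h ∂μ := by
          simpa using mul_meas_ge_le_lintegral (μ := μ)
            (Finset.measurable_fun_sum _ fun k _ ↦ measurable_coverage (ρ k) (hB k)) 1
      _ = ∑ k ∈ Finset.range N, ρ k Set.univ * μ (B k) := by
          rw [lintegral_finsetSum _ fun k _ ↦ measurable_coverage (ρ k) (hB k)]
          simp_rw [lintegral_coverage μ _ (hB _)]
      _ ≤ C * ∑ k ∈ Finset.range N, μ (B k) := by
          rw [Finset.mul_sum]
          gcongr with k
          exact hρC k
  rw [add_mul, one_mul]
  exact ((measure_mono hcover).trans (measure_union_le _ _)).trans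
    (add_le_add (measure_biUnion_finset_le _ _) hR)

/-- The Lindenstrauss maximal inequality; a deterministic, fractional covering replaces the usual
random one. -/
theorem IsTempered.weakTypeMaximal {ν : ℕ → Measure G} [∀ k, IsProbabilityMeasure (ν k)]
    {C : ℝ≥0} (hν : IsTempered ν C) : WeakTypeMaximal ν μ (2 * (1 + C)) := by
  intro f hf _ t
  simp_rw [Set.ofPred_exists, smul_eq_mul]
  refine mul_measure_iUnion_le fun N ↦ ?_
  set A : ℕ → Set G := fun n ↦ {h | t ≤ ∫⁻ e, f (e * h) ∂ν n}
  have hA (n : ℕ) : MeasurableSet (A n) :=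
    measurableSet_le measurable_const (measurable_lintegral_smul _ hf)
  obtain ⟨B, hB, hBA, hB2, hdrop⟩ := exists_greedy_packing μ ν hA N
  calc t * μ (⋃ n ∈ Finset.range N, A n)
      ≤ t * ((1 + C) * ∑ k ∈ Finset.range N, μ (B k)) := by
        gcongr
        exact measure_biUnion_le_of_overloaded_diff μ hν hB hdrop
    _ = (1 + C) * (t * ∑ k ∈ Finset.range N, μ (B k)) := mul_left_comm _ _ _
    _ ≤ (1 + C) * (2 * ∫⁻ g, f g ∂μ) := mul_le_mul' le_rfl <|
        sum_measure_le_of_sum_coverage_le_two μ hB hB2 hf fun k h hh ↦ hBA k hh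
    _ = 2 * (1 + C) * ∫⁻ g, f g ∂μ := by ring

end Greedy

end Packing

section Folner

variable {G : Type*} [MeasurableSpace G]

/-- Left translation of `ν n` by a fixed group element changes it by an amount that tends to `0`
in total variation. -/
def IsAsymptoticallyInvariant [Mul G] (ν : ℕ → Measure G) : Prop :=
  ∀ g, TendstoUniformlyOn (fun n B ↦ (ν n).real ((g * ·) ⁻¹' B) - (ν n).real B) 0 atTop
    {B | MeasurableSet B}

lemma IsAsymptoticallyInvariant.tendsto_measure_preimage [Mul G] {ν : ℕ → Measure G}
    [∀ n, IsFiniteMeasure (ν n)] (hν : IsAsymptoticallyInvariant ν) (g : G) {B : ℕ → Set G}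
    (hB : ∀ n, MeasurableSet (B n)) (hB0 : ∀ n, ν n (B n) = 0) :
    Tendsto (fun n ↦ ν n ((g * ·) ⁻¹' B n)) atTop (𝓝 0) := by
  refine (ENNReal.tendsto_toReal_iff (fun n ↦ measure_ne_top _ _) ENNReal.zero_ne_top).1 ?_
  refine Metric.tendsto_nhds.2 fun ε hε ↦ ?_
  filter_upwards [Metric.tendstoUniformlyOn_iff.1 (hν g) ε hε] with n hn
  simpa [measureReal_def, hB0, dist_comm] using hn (B n) (hB n)

variable [Group G] [MeasurableMul G] {μ : Measure G} [μ.IsMulLeftInvariant]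

lemma map_mul_cond_le (F : Set G) (g : G) :
    (μ[|F]).map (g * ·) ≤ (μ F)⁻¹ • μ.restrict (g • F) := by
  refine Measure.le_iff.2 fun s hs ↦ ?_
  have hpre : (g * ·) ⁻¹' s ∩ F = (g * ·) ⁻¹' (s ∩ g • F) := by
    ext x
    simp [Set.mem_smul_set_iff_inv_smul_mem]
  rw [Measure.map_apply (measurable_const_mul g) hs, ProbabilityTheory.cond, Measure.smul_apply,
    Measure.smul_apply, Measure.restrict_apply hs,
    Measure.restrict_apply (measurable_const_mul g hs), hpre, measure_preimage_mul]

lemma isTempered_cond {F : ℕ → Set G} (hF : ∀ n, MeasurableSet (F n)) {C : ℝ≥0}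
    (hC : ∀ n, μ (⋃ k ∈ Finset.range n, (F k)⁻¹ * F n) ≤ C * μ (F n)) :
    IsTempered (fun n ↦ μ[|F n]) C := by
  intro k
  set D : Set G := ⋃ d ∈ Finset.range k, (F d)⁻¹ * F k
  refine ⟨(μ (F k))⁻¹ • μ.restrict D, ?_, fun d hd ↦ ?_⟩
  · calc ((μ (F k))⁻¹ • μ.restrict D) Set.univ
        = (μ (F k))⁻¹ * μ D := by simp
      _ ≤ (μ (F k))⁻¹ * (C * μ (F k)) := mul_le_mul' le_rfl (hC k)
      _ = C * ((μ (F k))⁻¹ * μ (F k)) := mul_left_comm _ _ _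
      _ ≤ C := mul_le_of_le_one_right' (ENNReal.inv_mul_le_one _)
  · filter_upwards [ProbabilityTheory.ae_cond_mem (hF d)] with e he
    refine (map_mul_cond_le (F k) e⁻¹).trans ?_
    have hsub : e⁻¹ • F k ⊆ D := by
      refine Set.Subset.trans ?_ (Set.subset_biUnion_of_mem (Finset.mem_range.2 hd))
      rintro _ ⟨x, hx, rfl⟩
      exact Set.mul_mem_mul (Set.inv_mem_inv.2 he) hx
    gcongr

lemma abs_cond_preimage_mul_sub_le {F : Set G} (hF : MeasurableSet F) (hFtop : μ F ≠ ∞) (g : G)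
    {B : Set G} (hB : MeasurableSet B) :
    |(μ[|F]).real ((g * ·) ⁻¹' B) - (μ[|F]).real B| ≤ (μ ((g • F) ∆ F) / μ F).toReal := by
  have htranslate : F ∩ (g * ·) ⁻¹' B = (g * ·) ⁻¹' (g • F ∩ B) := by
    ext x
    simp [Set.mem_smul_set_iff_inv_smul_mem]
  have hgF : μ (g • F) ≠ ∞ := by rwa [measure_smul]
  have hsymm : (g • F ∩ B) ∆ (F ∩ B) ⊆ (g • F) ∆ F := by
    rw [← Set.inter_symmDiff_distrib_right]
    exact Set.inter_subset_left
  have hreal : |μ.real (g • F ∩ B) - μ.real (F ∩ B)| ≤ μ.real ((g • F) ∆ F) :=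
    (abs_measureReal_sub_le_measureReal_symmDiff' ((hF.const_smul g).inter hB).nullMeasurableSet
      (hF.inter hB).nullMeasurableSet (measure_ne_top_of_subset Set.inter_subset_left hgF)
      (measure_ne_top_of_subset Set.inter_subset_left hFtop)).trans
    (measureReal_mono hsymm (measure_symmDiff_ne_top hgF hFtop))
  have hcond (S : Set G) : (μ[|F]).real S = (μ.real F)⁻¹ * μ.real (F ∩ S) := by
    simp [measureReal_def, ProbabilityTheory.cond_apply hF]
  calc |(μ[|F]).real ((g * ·) ⁻¹' B) - (μ[|F]).real B|
      = (μ.real F)⁻¹ * |μ.real (g • F ∩ B) - μ.real (F ∩ B)| := by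
        rw [hcond, hcond, htranslate, measureReal_def μ (_ ⁻¹' _), measure_preimage_mul,
          ← measureReal_def, ← mul_sub, abs_mul, abs_of_nonneg (inv_nonneg.2 measureReal_nonneg)]
    _ ≤ (μ.real F)⁻¹ * μ.real ((g • F) ∆ F) := by gcongr
    _ = (μ ((g • F) ∆ F) / μ F).toReal := by
        rw [ENNReal.toReal_div, inv_mul_eq_div, measureReal_def, measureReal_def]

lemma isAsymptoticallyInvariant_cond {F : ℕ → Set G} (hF : ∀ n, MeasurableSet (F n))
    (hFtop : ∀ n, μ (F n) ≠ ∞)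
    (hfol : ∀ g : G, Tendsto (fun n ↦ μ ((g • F n) ∆ F n) / μ (F n)) atTop (𝓝 0)) :
    IsAsymptoticallyInvariant fun n ↦ μ[|F n] := by
  intro g
  have hlim := (ENNReal.tendsto_toReal ENNReal.zero_ne_top).comp (hfol g)
  refine Metric.tendstoUniformlyOn_iff.2 fun ε hε ↦ ?_
  filter_upwards [hlim.eventually_lt_const hε] with n hn B hB
  rw [dist_comm, Pi.zero_apply, dist_zero_right]
  exact (abs_cond_preimage_mul_sub_le (hF n) (hFtop n) g hB).trans_lt hn

end Folner

section Transference

variable {G Ω : Type*} [Monoid G] [MeasurableSpace G] [MeasurableSpace Ω] [MulAction G Ω]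
  [MeasurableSMul₂ G Ω]

variable [MeasurableMul₂ G] {ν : ℕ → Measure G} [∀ n, SFinite (ν n)] {μ : Measure G} [SFinite μ]
  {K : ℝ≥0∞}

lemma WeakTypeMaximal.mul_measure_restrict_le (hK : WeakTypeMaximal ν μ K) {W : Set G}
    (hW : MeasurableSet W) {a : G → ℝ≥0∞} (ha : Measurable a) (haW : ∫⁻ g in W, a g ∂μ ≠ ∞)
    (t : ℝ≥0∞) (N : ℕ) :
    t * μ.restrict W (⋃ n ∈ Finset.range N, {h | 2 * t ≤ ∫⁻ e, a (e * h) ∂ν n}) ≤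
      K * ∫⁻ g in W, a g ∂μ +
        ∑ n ∈ Finset.range N, ∫⁻ g in Wᶜ, a g ∂(ν n ∗ₘ μ.restrict W) := by
  have ha' : Measurable (Wᶜ.indicator a) := ha.indicator hW.compl
  have hmconv (n : ℕ) : ∫⁻ g in Wᶜ, a g ∂(ν n ∗ₘ μ.restrict W) =
      ∫⁻ h, ∫⁻ e, Wᶜ.indicator a (e • h) ∂ν n ∂μ.restrict W := by
    rw [← lintegral_indicator hW.compl, Measure.lintegral_mconv ha']
    exact lintegral_lintegral_swap (by fun_prop)
  simp_rw [hmconv]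
  rw [← lintegral_indicator hW] at haW ⊢
  simpa only [Set.indicator_self_add_compl_apply, smul_eq_mul] using
    hK.mul_measure_add_le (Measure.restrict_le_self (s := W)) (ha.indicator hW) ha' haW t N

variable {P : Measure Ω} [SFinite P] [SMulInvariantMeasure G Ω P]

lemma WeakTypeMaximal.mul_measure_window_le (hK : WeakTypeMaximal ν μ K) {W : Set G}
    (hW : MeasurableSet W) (hWtop : μ W ≠ ∞) {f : Ω → ℝ≥0∞} (hf : Measurable f)
    (hfP : ∫⁻ ω, f ω ∂P ≠ ∞) (t : ℝ≥0∞) (N : ℕ) :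
    t * (μ W * P (⋃ n ∈ Finset.range N, {ω | 2 * t ≤ ∫⁻ g, f (g • ω) ∂ν n})) ≤
      (K * μ W + ∑ n ∈ Finset.range N, (ν n ∗ₘ μ.restrict W) Wᶜ) * ∫⁻ ω, f ω ∂P := by
  set E : Set Ω := ⋃ n ∈ Finset.range N, {ω | 2 * t ≤ ∫⁻ g, f (g • ω) ∂ν n}
  have hE : MeasurableSet E := Finset.measurableSet_biUnion _ fun n _ ↦
    measurableSet_le measurable_const (measurable_lintegral_smul _ hf)
  have hmeas (ρ : Measure G) [SFinite ρ] := measurable_lintegral_smul ρ hf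
  have hfin : ∀ᵐ ω ∂P, ∫⁻ g in W, f (g • ω) ∂μ < ∞ := by
    refine ae_lt_top (hmeas _) ?_
    rw [lintegral_lintegral_smul _ P hf, Measure.restrict_apply_univ]
    exact ENNReal.mul_ne_top hWtop hfP
  have horbit : ∀ᵐ ω ∂P, t * ∫⁻ g in W, E.indicator 1 (g • ω) ∂μ ≤
      K * ∫⁻ g in W, f (g • ω) ∂μ +
        ∑ n ∈ Finset.range N, ∫⁻ g in Wᶜ, f (g • ω) ∂(ν n ∗ₘ μ.restrict W) := by
    filter_upwards [hfin] with ω hω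
    have hmeas_orbit : Measurable fun g : G ↦ g • ω := by fun_prop
    have hE_orbit : (fun g : G ↦ g • ω) ⁻¹' E =
        ⋃ n ∈ Finset.range N, {h | 2 * t ≤ ∫⁻ e, f ((e * h) • ω) ∂ν n} := by
      simp only [E, Set.preimage_iUnion, mul_smul]
      rfl
    have hE_measure : ∫⁻ g in W, E.indicator 1 (g • ω) ∂μ =
        μ.restrict W ((fun g : G ↦ g • ω) ⁻¹' E) :=
      lintegral_indicator_one (hmeas_orbit hE)
    rw [hE_measure, hE_orbit]
    exact hK.mul_measure_restrict_le hW (by fun_prop) hω.ne t N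
  have hone : Measurable (E.indicator (1 : Ω → ℝ≥0∞)) := measurable_one.indicator hE
  calc t * (μ W * P E)
      = ∫⁻ ω, t * ∫⁻ g in W, E.indicator 1 (g • ω) ∂μ ∂P := by
        rw [lintegral_const_mul _ (measurable_lintegral_smul _ hone),
          lintegral_lintegral_smul _ P hone, lintegral_indicator_one hE,
          Measure.restrict_apply_univ]
    _ ≤ _ := lintegral_mono_ae horbit
    _ = _ := by
        rw [lintegral_add_left ((hmeas _).const_mul _), lintegral_const_mul _ (hmeas _),
          lintegral_finsetSum _ fun n _ ↦ hmeas _]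
        simp_rw [lintegral_lintegral_smul _ P hf, Measure.restrict_apply_univ, add_mul,
          Finset.sum_mul, mul_assoc]

lemma WeakTypeMaximal.half_mul_measure_le (hK : WeakTypeMaximal ν μ K) {W : Set G}
    (hW : MeasurableSet W) (hW0 : μ W ≠ 0) (hWtop : μ W ≠ ∞) {f : Ω → ℝ≥0∞} (hf : Measurable f)
    (hfP : ∫⁻ ω, f ω ∂P ≠ ∞) (t : ℝ≥0∞) (N : ℕ) :
    t / 2 * P (⋃ n ∈ Finset.range N, {ω | t ≤ ∫⁻ g, f (g • ω) ∂ν n}) ≤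
      (K + ∑ n ∈ Finset.range N, (ν n ∗ₘ μ[|W]) Wᶜ) * ∫⁻ ω, f ω ∂P := by
  have hwindow := hK.mul_measure_window_le hW hWtop hf hfP (t / 2) N
  rw [ENNReal.mul_div_cancel two_ne_zero ENNReal.ofNat_ne_top] at hwindow
  calc t / 2 * P (⋃ n ∈ Finset.range N, {ω | t ≤ ∫⁻ g, f (g • ω) ∂ν n})
      = (μ W)⁻¹ * (t / 2 * (μ W * P (⋃ n ∈ Finset.range N,
          {ω | t ≤ ∫⁻ g, f (g • ω) ∂ν n}))) := by
        rw [mul_left_comm (t / 2), ← mul_assoc, ENNReal.inv_mul_cancel hW0 hWtop, one_mul]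
    _ ≤ (μ W)⁻¹ * ((K * μ W + ∑ n ∈ Finset.range N, (ν n ∗ₘ μ.restrict W) Wᶜ) *
          ∫⁻ ω, f ω ∂P) := mul_le_mul' le_rfl hwindow
    _ = (K + ∑ n ∈ Finset.range N, (ν n ∗ₘ μ[|W]) Wᶜ) * ∫⁻ ω, f ω ∂P := by
        simp_rw [ProbabilityTheory.cond, Measure.mconv_smul_right, Measure.smul_apply, smul_eq_mul,
          ← Finset.mul_sum]
        rw [← mul_assoc, mul_add, mul_left_comm _ K, ENNReal.inv_mul_cancel hW0 hWtop, mul_one]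

lemma tendsto_mconv_apply_zero {ν : Measure G} [IsFiniteMeasure ν] {ρ : ℕ → Measure G}
    [∀ n, IsProbabilityMeasure (ρ n)] {s : ℕ → Set G} (hs : ∀ n, MeasurableSet (s n))
    (h : ∀ g, Tendsto (fun n ↦ ρ n ((g * ·) ⁻¹' s n)) atTop (𝓝 0)) :
    Tendsto (fun n ↦ (ν ∗ₘ ρ n) (s n)) atTop (𝓝 0) := by
  have hmconv (n : ℕ) : (ν ∗ₘ ρ n) (s n) = ∫⁻ g, ρ n ((g * ·) ⁻¹' s n) ∂ν := by
    rw [← lintegral_indicator_one (hs n),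
      Measure.lintegral_mconv (measurable_one.indicator (hs n))]
    exact lintegral_congr fun g ↦ lintegral_indicator_one (measurable_const_mul g (hs n))
  simp_rw [hmconv]
  rw [← lintegral_zero (μ := ν)]
  refine tendsto_lintegral_of_dominated_convergence 1 (fun n ↦ ?_) (fun n ↦ ?_) (by simp)
    (ae_of_all _ h)
  · exact measurable_measure_prodMk_left (s := {p : G × G | p.1 * p.2 ∈ s n})
      (measurable_mul (hs n))
  · exact ae_of_all _ fun g ↦ prob_le_one

/-- Calderón's transference principle. -/
theorem WeakTypeMaximal.transfer {ν : ℕ → Measure G} [∀ n, IsFiniteMeasure (ν n)]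
    (hK : WeakTypeMaximal ν μ K) {W : ℕ → Set G} (hW : ∀ n, MeasurableSet (W n))
    (hW0 : ∀ n, μ (W n) ≠ 0) (hWtop : ∀ n, μ (W n) ≠ ∞)
    (hinv : IsAsymptoticallyInvariant fun n ↦ μ[|W n]) :
    WeakTypeMaximal ν P (2 * K) := by
  intro f hf hfP t
  have (n : ℕ) : IsProbabilityMeasure μ[|W n] :=
    ProbabilityTheory.cond_isProbabilityMeasure_of_finite (hW0 n) (hWtop n)
  simp_rw [Set.ofPred_exists]
  refine mul_measure_iUnion_le fun N ↦ ?_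
  have hbound (n : ℕ) := hK.half_mul_measure_le (hW n) (hW0 n) (hWtop n) hf hfP t N
  have hwindow (g : G) : Tendsto (fun n ↦ μ[|W n] ((g * ·) ⁻¹' (W n)ᶜ)) atTop (𝓝 0) :=
    hinv.tendsto_measure_preimage g (fun n ↦ (hW n).compl) fun n ↦ by
      simp [ProbabilityTheory.cond_apply (hW n)]
  have hlim : Tendsto (fun n ↦ (K + ∑ j ∈ Finset.range N, (ν j ∗ₘ μ[|W n]) (W n)ᶜ) *
      ∫⁻ ω, f ω ∂P) atTop (𝓝 (K * ∫⁻ ω, f ω ∂P)) := by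
    refine ENNReal.Tendsto.mul_const ?_ (Or.inr hfP)
    simpa using tendsto_const_nhds.add <| tendsto_finsetSum (Finset.range N) fun j _ ↦
      tendsto_mconv_apply_zero (ν := ν j) (fun n ↦ (hW n).compl) hwindow
  calc t * P (⋃ n ∈ Finset.range N, {ω | t ≤ ∫⁻ g, f (g • ω) ∂ν n})
      = 2 * (t / 2 * P (⋃ n ∈ Finset.range N, {ω | t ≤ ∫⁻ g, f (g • ω) ∂ν n})) := by
        rw [← mul_assoc, ENNReal.mul_div_cancel two_ne_zero ENNReal.ofNat_ne_top]
    _ ≤ 2 * (K * ∫⁻ ω, f ω ∂P) := mul_le_mul' le_rfl (ge_of_tendsto' hlim hbound)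
    _ = 2 * K * ∫⁻ ω, f ω ∂P := (mul_assoc _ _ _).symm

end Transference

section OrbitAverage

variable {G Ω X : Type*} [MeasurableSpace G] [MeasurableSpace Ω] [SMul G Ω]
  [MeasurableSMul₂ G Ω] [NormedAddCommGroup X]

lemma measurePreserving_smul_prod (P : Measure Ω) [SFinite P] [SMulInvariantMeasure G Ω P]
    (ν : Measure G) [IsProbabilityMeasure ν] :
    MeasurePreserving (fun p : Ω × G ↦ p.2 • p.1) (P.prod ν) P := by
  have hskew : MeasurePreserving (fun p : G × Ω ↦ (p.1, p.1 • p.2)) (ν.prod P) (ν.prod P) :=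
    (MeasurePreserving.id ν).skew_product measurable_smul
      (ae_of_all _ fun g ↦ (measurePreserving_smul g P).map_eq)
  exact (measurePreserving_snd.comp hskew).comp Measure.measurePreserving_swap

variable {P : Measure Ω} [SFinite P] [SMulInvariantMeasure G Ω P] {ν : Measure G}
  [IsProbabilityMeasure ν]

lemma ae_ae_smul_of_ae {p : Ω → Prop} (h : ∀ᵐ ω ∂P, p ω) : ∀ᵐ ω ∂P, ∀ᵐ g ∂ν, p (g • ω) :=
  Measure.ae_ae_of_ae_prod ((measurePreserving_smul_prod P ν).quasiMeasurePreserving.ae h)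

lemma ae_integrable_smul {f : Ω → X} (hf : Integrable f P) :
    ∀ᵐ ω ∂P, Integrable (fun g ↦ f (g • ω)) ν :=
  ((measurePreserving_smul_prod P ν).integrable_comp_of_integrable hf).prod_right_ae

variable [NormedSpace ℝ X]

lemma integrable_integral_smul {f : Ω → X} (hf : Integrable f P) :
    Integrable (fun ω ↦ ∫ g, f (g • ω) ∂ν) P :=
  ((measurePreserving_smul_prod P ν).integrable_comp_of_integrable hf).integral_prod_left

lemma norm_toL1_integral_smul_le (f : Lp X 1 P) :
    ‖(integrable_integral_smul (ν := ν) (L1.integrable_coeFn f)).toL1 _‖ ≤ ‖f‖ := by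
  rw [← enorm_le_iff_norm_le, Integrable.enorm_toL1, Lp.enorm_def, eLpNorm_one_eq_lintegral_enorm]
  calc ∫⁻ ω, ‖∫ g, f (g • ω) ∂ν‖ₑ ∂P
      ≤ ∫⁻ ω, ∫⁻ g, ‖f (g • ω)‖ₑ ∂ν ∂P :=
        lintegral_mono fun ω ↦ enorm_integral_le_lintegral_enorm _
    _ = ∫⁻ ω, ‖f ω‖ₑ ∂P := by
        rw [lintegral_lintegral_smul ν P (Lp.stronglyMeasurable f).enorm, measure_univ, one_mul]

variable (P ν) in
/-- The averaging operator `f ↦ ∫ f (g • ·) ∂ν(g)` on the Bochner space `L¹(P; X)`. -/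
noncomputable def orbitAverage : Lp X 1 P →L[ℝ] Lp X 1 P :=
  LinearMap.mkContinuous
    { toFun f := (integrable_integral_smul (ν := ν) (L1.integrable_coeFn f)).toL1 _
      map_add' f g := by
        rw [← Integrable.toL1_add, Integrable.toL1_eq_toL1_iff]
        filter_upwards [ae_integrable_smul (ν := ν) (L1.integrable_coeFn f),
          ae_integrable_smul (ν := ν) (L1.integrable_coeFn g),
          ae_ae_smul_of_ae (ν := ν) (Lp.coeFn_add f g)] with ω hf hg hfg
        rw [integral_congr_ae hfg]
        exact integral_add hf hg
      map_smul' c f := by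
        rw [RingHom.id_apply, ← Integrable.toL1_smul, Integrable.toL1_eq_toL1_iff]
        filter_upwards [ae_ae_smul_of_ae (ν := ν) (Lp.coeFn_smul c f)] with ω hcf
        rw [integral_congr_ae hcf]
        exact integral_smul c _ }
    1 fun f ↦ (norm_toL1_integral_smul_le f).trans_eq (one_mul _).symm

lemma norm_orbitAverage_le (f : Lp X 1 P) : ‖orbitAverage P ν f‖ ≤ ‖f‖ :=
  norm_toL1_integral_smul_le f

lemma coeFn_orbitAverage (f : Lp X 1 P) :
    orbitAverage P ν f =ᵐ[P] fun ω ↦ ∫ g, f (g • ω) ∂ν :=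
  Integrable.coeFn_toL1 (integrable_integral_smul (L1.integrable_coeFn f))

lemma orbitAverage_toL1 {φ : Ω → X} (hφ : Integrable φ P) :
    orbitAverage P ν (hφ.toL1 φ) =ᵐ[P] fun ω ↦ ∫ g, φ (g • ω) ∂ν := by
  filter_upwards [coeFn_orbitAverage (ν := ν) (hφ.toL1 φ),
    ae_ae_smul_of_ae (ν := ν) hφ.coeFn_toL1] with ω hω hφω
  exact hω.trans (integral_congr_ae hφω)

lemma orbitAverage_cond_toL1 {μ : Measure G} {F : Set G} [IsProbabilityMeasure μ[|F]] {φ : Ω → X}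
    (hφ : Integrable φ P) : orbitAverage P μ[|F] (hφ.toL1 φ) =ᵐ[P]
      fun ω ↦ (μ F).toReal⁻¹ • ∫ g in F, φ (g • ω) ∂μ := by
  filter_upwards [orbitAverage_toL1 (ν := μ[|F]) hφ] with ω hω
  rw [hω, ProbabilityTheory.cond, integral_smul_measure, ENNReal.toReal_inv]

lemma WeakTypeMaximal.mul_measure_orbitAverage_le {ν : ℕ → Measure G}
    [∀ n, IsProbabilityMeasure (ν n)] {K : ℝ≥0∞} (hK : WeakTypeMaximal ν P K) (f : Lp X 1 P)
    (t : ℝ≥0∞) : t * P {ω | ∃ n, t ≤ ‖orbitAverage P (ν n) f ω‖ₑ} ≤ K * ‖f‖ₑ := by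
  have hle : {ω | ∃ n, t ≤ ‖orbitAverage P (ν n) f ω‖ₑ} ≤ᵐ[P]
      {ω | ∃ n, t ≤ ∫⁻ g, ‖f (g • ω)‖ₑ ∂ν n} := by
    filter_upwards [ae_all_iff.2 fun n ↦ coeFn_orbitAverage (ν := ν n) f] with ω hω
    rintro ⟨n, hn⟩
    exact ⟨n, hn.trans ((hω n).symm ▸ enorm_integral_le_lintegral_enorm _)⟩
  have hf : ∫⁻ ω, ‖f ω‖ₑ ∂P = ‖f‖ₑ := by rw [Lp.enorm_def, eLpNorm_one_eq_lintegral_enorm]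
  rw [← hf]
  refine (mul_le_mul' le_rfl (measure_mono_ae hle)).trans
    (hK (Lp.stronglyMeasurable f).enorm (hf ▸ enorm_ne_top) t)

end OrbitAverage

section BanachPrinciple

variable {𝕜 Ω E X : Type*} [NontriviallyNormedField 𝕜] [MeasurableSpace Ω] {P : Measure Ω}
  [NormedAddCommGroup E] [NormedSpace 𝕜 E] [NormedAddCommGroup X] [NormedSpace 𝕜 X] {p : ℝ≥0∞}
  [Fact (1 ≤ p)]

/-- The vectors that `A n` sends to `0` in the limit, both almost everywhere and in norm. -/
def vanishingSubmodule (A : ℕ → E →L[𝕜] Lp X p P) : Submodule 𝕜 E where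
  carrier := {f | (∀ᵐ ω ∂P, Tendsto (fun n ↦ A n f ω) atTop (𝓝 0)) ∧
    Tendsto (fun n ↦ A n f) atTop (𝓝 0)}
  zero_mem' := by
    refine ⟨?_, by simp⟩
    filter_upwards [Lp.coeFn_zero X p P] with ω hω
    simp only [map_zero, hω, Pi.zero_apply, tendsto_const_nhds]
  add_mem' {f g} hf hg := by
    refine ⟨?_, by simpa using hf.2.add hg.2⟩
    filter_upwards [hf.1, hg.1, ae_all_iff.2 fun n ↦ Lp.coeFn_add (A n f) (A n g)]
      with ω hfω hgω hadd
    simpa only [map_add, hadd, Pi.add_apply, add_zero] using hfω.add hgω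
  smul_mem' c f hf := by
    refine ⟨?_, by simpa using hf.2.const_smul c⟩
    filter_upwards [hf.1, ae_all_iff.2 fun n ↦ Lp.coeFn_smul c (A n f)] with ω hfω hsmul
    simpa only [map_smul, hsmul, Pi.smul_apply, smul_zero] using hfω.const_smul c

variable {A : ℕ → E →L[𝕜] Lp X p P} {K : ℝ≥0∞}

lemma mul_measure_frequently_le
    (hK : ∀ f t, t * P {ω | ∃ n, t ≤ ‖A n f ω‖ₑ} ≤ K * ‖f‖ₑ) (f : E) {g : E}
    (hg : ∀ᵐ ω ∂P, Tendsto (fun n ↦ A n g ω) atTop (𝓝 0)) {t : ℝ≥0∞} (ht : t ≠ 0) :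
    t * P {ω | ∃ᶠ n in atTop, 2 * t ≤ ‖A n f ω‖ₑ} ≤ K * ‖f - g‖ₑ := by
  have hle : {ω | ∃ᶠ n in atTop, 2 * t ≤ ‖A n f ω‖ₑ} ≤ᵐ[P]
      {ω | ∃ n, t ≤ ‖A n (f - g) ω‖ₑ} := by
    filter_upwards [hg, ae_all_iff.2 fun n ↦ Lp.coeFn_sub (A n f) (A n g)] with ω hgω hsub hfreq
    have hg_small : ∀ᶠ n in atTop, ‖A n g ω‖ₑ < t := by
      have hlim := hgω.enorm
      rw [enorm_zero] at hlim
      exact hlim.eventually_lt_const ht.bot_lt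
    obtain ⟨n, hfn, hgn⟩ := (hfreq.and_eventually hg_small).exists
    refine ⟨n, not_lt.1 fun hfg_small ↦ hfn.not_gt ?_⟩
    rw [map_sub, hsub] at hfg_small
    calc ‖A n f ω‖ₑ = ‖(A n f ω - A n g ω) + A n g ω‖ₑ := by rw [sub_add_cancel]
      _ ≤ ‖A n f ω - A n g ω‖ₑ + ‖A n g ω‖ₑ := enorm_add_le _ _
      _ < t + t := ENNReal.add_lt_add hfg_small hgn
      _ = 2 * t := (two_mul t).symm
  exact (mul_le_mul' le_rfl (measure_mono_ae hle)).trans (hK (f - g) t)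

lemma isClosed_setOfPred_ae_tendsto_zero (hKtop : K ≠ ∞)
    (hK : ∀ f t, t * P {ω | ∃ n, t ≤ ‖A n f ω‖ₑ} ≤ K * ‖f‖ₑ) :
    IsClosed {f | ∀ᵐ ω ∂P, Tendsto (fun n ↦ A n f ω) atTop (𝓝 0)} := by
  refine isClosed_of_closure_subset fun f hf ↦ ?_
  obtain ⟨g, hg, hgf⟩ := mem_closure_iff_seq_limit.1 hf
  have hlim : Tendsto (fun j ↦ K * ‖f - g j‖ₑ) atTop (𝓝 0) := by
    have hsub := (tendsto_const_nhds (x := f)).sub hgf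
    simpa only [sub_self, enorm_zero, mul_zero] using
      ENNReal.Tendsto.const_mul hsub.enorm (Or.inr hKtop)
  have hnull {t : ℝ≥0∞} (ht : t ≠ 0) : P {ω | ∃ᶠ n in atTop, 2 * t ≤ ‖A n f ω‖ₑ} = 0 := by
    have hle := ge_of_tendsto' hlim fun j ↦ mul_measure_frequently_le hK f (hg j) ht
    simpa [ht] using hle
  obtain ⟨t, -, ht, ht0⟩ := exists_seq_strictAnti_tendsto' ENNReal.zero_lt_top
  have hsmall : ∀ᵐ ω ∂P, ∀ j, ∀ᶠ n in atTop, ‖A n f ω‖ₑ < 2 * t j :=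
    ae_all_iff.2 fun j ↦ by simpa only [ae_iff, not_eventually, not_lt] using hnull (ht j).1.ne'
  have ht0' : Tendsto (fun j ↦ 2 * t j) atTop (𝓝 0) := by
    simpa using ENNReal.Tendsto.const_mul ht0 (Or.inr ENNReal.ofNat_ne_top)
  filter_upwards [hsmall] with ω hω
  refine tendsto_zero_iff_enorm_tendsto_zero.2 (ENNReal.tendsto_nhds_zero.2 fun ε hε ↦ ?_)
  obtain ⟨j, hj⟩ := (ht0'.eventually_lt_const hε).exists
  exact (hω j).mono fun n hn ↦ (hn.trans hj).le

/-- Banach's principle. -/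
theorem isClosed_vanishingSubmodule {M : ℝ} (hM : ∀ n f, ‖A n f‖ ≤ M * ‖f‖) (hKtop : K ≠ ∞)
    (hK : ∀ f t, t * P {ω | ∃ n, t ≤ ‖A n f ω‖ₑ} ≤ K * ‖f‖ₑ) :
    IsClosed (vanishingSubmodule A : Set E) := by
  have hequi : Equicontinuous fun n ↦ (A n : E → Lp X p P) :=
    ((NormedSpace.equicontinuous_TFAE A).out 1 3).2 (Exists.intro M hM)
  exact (isClosed_setOfPred_ae_tendsto_zero hKtop hK).inter
    (hequi.isClosed_setOfPred_tendsto continuous_const)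

lemma mem_vanishingSubmodule_of_eventually_norm_le [IsFiniteMeasure P] {f : E}
    (h : ∀ ε > 0, ∀ᶠ n in atTop, ∀ᵐ ω ∂P, ‖A n f ω‖ ≤ ε) : f ∈ vanishingSubmodule A := by
  constructor
  · obtain ⟨ε, -, hε, hε0⟩ := exists_seq_strictAnti_tendsto (0 : ℝ)
    have hae : ∀ᵐ ω ∂P, ∀ j, ∀ᶠ n in atTop, ‖A n f ω‖ ≤ ε j := by
      refine ae_all_iff.2 fun j ↦ ?_
      obtain ⟨N, hN⟩ := eventually_atTop.1 (h (ε j) (hε j))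
      filter_upwards [ae_all_iff.2 fun n ↦ ae_all_iff.2 (hN n)] with ω hω
      exact eventually_atTop.2 ⟨N, hω⟩
    filter_upwards [hae] with ω hω
    refine Metric.tendsto_nhds.2 fun δ hδ ↦ ?_
    obtain ⟨j, hj⟩ := (hε0.eventually_lt_const hδ).exists
    exact (hω j).mono fun n hn ↦ (dist_zero_right _).trans_lt (hn.trans_lt hj)
  · set c : ℝ := P.real Set.univ ^ p.toReal⁻¹
    have : 0 ≤ c := by positivity
    refine Metric.tendsto_nhds.2 fun δ hδ ↦ ?_
    filter_upwards [h (δ / (c + 1)) (by positivity)] with n hn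
    calc dist (A n f) 0 = ‖A n f‖ := dist_zero_right _
      _ ≤ c * (δ / (c + 1)) := Lp.norm_le_of_ae_bound (by positivity) hn
      _ < (c + 1) * (δ / (c + 1)) := by gcongr; exact lt_add_one c
      _ = δ := mul_div_cancel₀ _ (by positivity)

end BanachPrinciple

section Splitting

lemma isClosed_sup_of_norm_le_norm_add {𝕜 E : Type*} [NormedField 𝕜] [NormedAddCommGroup E]
    [NormedSpace 𝕜 E] [CompleteSpace E] {I N : Submodule 𝕜 E} (hI : IsClosed (I : Set E))
    (hN : IsClosed (N : Set E))
    (h : ∀ x ∈ I, ∀ y ∈ N, ‖x‖ ≤ ‖x + y‖) : IsClosed ((I ⊔ N : Submodule 𝕜 E) : Set E) := by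
  have := hI.completeSpace_coe
  have := hN.completeSpace_coe
  set s : I × N →L[𝕜] E := I.subtypeL.coprod N.subtypeL
  have hs : AntilipschitzWith 2 s := ContinuousLinearMap.antilipschitz_of_bound s fun z ↦ by
    have hx : ‖z.1‖ ≤ ‖s z‖ := h _ z.1.2 _ z.2.2
    have hy : ‖z.2‖ ≤ ‖s z‖ + ‖z.1‖ := by
      simpa [s] using norm_sub_le (s z) (z.1 : E)
    rw [Prod.norm_def, NNReal.coe_ofNat]
    exact max_le (by linarith [norm_nonneg (s z)]) (by linarith)
  have hrange : ((I ⊔ N : Submodule 𝕜 E) : Set E) = Set.range s := by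
    rw [Submodule.sup_eq_range]
    rfl
  rw [hrange]
  exact hs.isClosed_range s.uniformContinuous

/-- The subspace of vectors fixed by a linear action of `Γ`. -/
def fixedSubmodule (𝕜 Γ E : Type*) [Semiring 𝕜] [AddCommMonoid E] [Module 𝕜 E] [Monoid Γ]
    [DistribMulAction Γ E] [SMulCommClass Γ 𝕜 E] : Submodule 𝕜 E where
  carrier := MulAction.fixedPoints Γ E
  zero_mem' γ := smul_zero γ
  add_mem' hx hy γ := by rw [smul_add, hx γ, hy γ]
  smul_mem' c x hx γ := by rw [smul_comm, hx γ]

section Fixed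

variable {𝕜 Γ E : Type*} [Monoid Γ]

lemma isClosed_fixedSubmodule [NormedField 𝕜] [NormedAddCommGroup E] [NormedSpace 𝕜 E]
    [DistribMulAction Γ E] [SMulCommClass Γ 𝕜 E] [ContinuousConstSMul Γ E] :
    IsClosed (fixedSubmodule 𝕜 Γ E : Set E) := by
  have hinter : (fixedSubmodule 𝕜 Γ E : Set E) = ⋂ γ : Γ, {x | γ • x = x} := by
    ext x
    simp only [Set.mem_iInter]
    rfl
  rw [hinter]
  exact isClosed_iInter fun γ ↦ isClosed_eq (continuous_const_smul γ) continuous_id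

/-- The orthogonality argument of von Neumann's mean ergodic theorem. -/
lemma orthogonal_span_smul_sub_le_fixedSubmodule [RCLike 𝕜] [NormedAddCommGroup E]
    [InnerProductSpace 𝕜 E] [DistribMulAction Γ E] [SMulCommClass Γ 𝕜 E] [IsIsometricSMul Γ E] :
    (Submodule.span 𝕜 {w | ∃ (γ : Γ) (u : E), w = γ • u - u})ᗮ ≤ fixedSubmodule 𝕜 Γ E := by
  intro v hv γ
  have hnorm : ‖γ • v‖ = ‖v‖ := by simpa using dist_smul γ v (0 : E)
  refine eq_of_norm_le_re_inner_eq_norm_sq (𝕜 := 𝕜) hnorm.le ?_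
  have horth := (Submodule.mem_orthogonal _ _).1 hv _ (Submodule.subset_span ⟨γ, v, rfl⟩)
  rw [inner_sub_left, sub_eq_zero] at horth
  rw [horth, inner_self_eq_norm_sq]

lemma apply_mem_fixedSubmodule_sup [RCLike 𝕜] {H : Type*} [NormedAddCommGroup H]
    [InnerProductSpace 𝕜 H] [CompleteSpace H] [DistribMulAction Γ H] [SMulCommClass Γ 𝕜 H]
    [IsIsometricSMul Γ H]
    [NormedAddCommGroup E] [NormedSpace 𝕜 E] [DistribMulAction Γ E] [SMulCommClass Γ 𝕜 E]
    {N : Submodule 𝕜 E} (hN : IsClosed (N : Set E)) (hΓN : ∀ (γ : Γ) (x : E), γ • x - x ∈ N)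
    {Φ : H →L[𝕜] E} (hΦ : ∀ (γ : Γ) (u : H), Φ (γ • u) = γ • Φ u) (u : H) :
    Φ u ∈ fixedSubmodule 𝕜 Γ E ⊔ N := by
  set S : Submodule 𝕜 H := Submodule.span 𝕜 {w | ∃ (γ : Γ) (u : H), w = γ • u - u}
  have hS : S.topologicalClosure ≤ N.comap (Φ : H →ₗ[𝕜] E) := by
    refine S.topologicalClosure_minimal (Submodule.span_le.2 ?_) (hN.preimage Φ.continuous)
    rintro _ ⟨γ, v, rfl⟩
    simpa [hΦ] using hΓN γ (Φ v)
  obtain ⟨a, ha, b, hb, rfl⟩ := S.topologicalClosure.exists_add_mem_mem_orthogonal u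
  rw [Submodule.orthogonal_closure] at hb
  have hb_fixed : Φ b ∈ fixedSubmodule 𝕜 Γ E := fun γ ↦ by
    rw [← hΦ, orthogonal_span_smul_sub_le_fixedSubmodule hb γ]
  rw [map_add, add_comm]
  exact Submodule.add_mem_sup hb_fixed (hS ha)

end Fixed

end Splitting

section ErgodicDecomposition

variable {G Ω X : Type*} [Monoid G] [MeasurableSpace G] [MeasurableSpace Ω] [MulAction G Ω]
  [MeasurableSMul₂ G Ω] [NormedAddCommGroup X] [NormedSpace ℝ X] {P : Measure Ω}
  [SMulInvariantMeasure G Ω P]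

lemma ae_smul_eq_of_mem_fixedSubmodule {p : ℝ≥0∞} {f : Lp X p P}
    (hf : f ∈ fixedSubmodule ℝ Gᵈᵐᵃ (Lp X p P)) (g : G) : ∀ᵐ ω ∂P, f (g • ω) = f ω := by
  have hsmul := DomMulAct.smul_Lp_ae_eq (DomMulAct.mk g) f
  rw [hf] at hsmul
  exact hsmul.symm

lemma orbitAverage_eq_self [SFinite P] {ν : Measure G} [IsProbabilityMeasure ν] [CompleteSpace X]
    {f : Lp X 1 P} (hf : f ∈ fixedSubmodule ℝ Gᵈᵐᵃ (Lp X 1 P)) : orbitAverage P ν f = f := by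
  have hf_ae : ∀ᵐ g ∂ν, ∀ᵐ ω ∂P, f (g • ω) = f ω :=
    ae_of_all _ (ae_smul_eq_of_mem_fixedSubmodule hf)
  have hmeas : MeasurableSet {q : G × Ω | f (q.1 • q.2) = f q.2} :=
    ((Lp.stronglyMeasurable f).comp_measurable measurable_smul).measurableSet_eq_fun
      ((Lp.stronglyMeasurable f).comp_measurable measurable_snd)
  refine Lp.ext ?_
  filter_upwards [coeFn_orbitAverage (ν := ν) f, (Measure.ae_ae_comm hmeas).1 hf_ae]
    with ω havg hω
  rw [havg, integral_congr_ae hω, integral_const, probReal_univ, one_smul]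

variable [IsFiniteMeasure P]

section Coboundary

variable [CompleteSpace X]

lemma orbitAverage_indicatorConstLp {ν : Measure G} [IsProbabilityMeasure ν] {s : Set Ω}
    (hs : MeasurableSet s) (x : X) :
    orbitAverage P ν (indicatorConstLp 1 hs (measure_ne_top P s) x) =ᵐ[P]
      fun ω ↦ ν.real {g | g • ω ∈ s} • x := by
  filter_upwards [coeFn_orbitAverage (ν := ν) (indicatorConstLp 1 hs (measure_ne_top P s) x),
    ae_ae_smul_of_ae (ν := ν) (indicatorConstLp_coeFn (μ := P) (p := 1) (c := x)
      (hs := hs) (hμs := measure_ne_top P s))] with ω havg hω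
  have hpre : MeasurableSet {g : G | g • ω ∈ s} := measurable_smul_const ω hs
  rw [havg, integral_congr_ae hω, ← integral_indicator_const x hpre]
  rfl

lemma orbitAverage_mk_smul_indicatorConstLp_sub {ν : Measure G} [IsProbabilityMeasure ν] (g : G)
    {s : Set Ω} (hs : MeasurableSet s) (x : X) :
    orbitAverage P ν (DomMulAct.mk g • indicatorConstLp 1 hs (measure_ne_top P s) x -
        indicatorConstLp 1 hs (measure_ne_top P s) x) =ᵐ[P]
      fun ω ↦ (ν.real ((g * ·) ⁻¹' {h | h • ω ∈ s}) - ν.real {h | h • ω ∈ s}) • x := by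
  rw [DomMulAct.mk_smul_indicatorConstLp, map_sub]
  refine (Lp.coeFn_sub _ _).trans ?_
  filter_upwards [orbitAverage_indicatorConstLp (ν := ν) hs x,
    orbitAverage_indicatorConstLp (ν := ν) (measurable_const_smul g hs) x] with ω hω hgω
  have htranslate : {h : G | h • ω ∈ (g • ·) ⁻¹' s} = (g * ·) ⁻¹' {h | h • ω ∈ s} := by
    ext h
    simp [mul_smul]
  rw [Pi.sub_apply, hω, hgω, htranslate, sub_smul]

variable {ν : ℕ → Measure G} [∀ n, IsProbabilityMeasure (ν n)]

lemma smul_indicatorConstLp_sub_mem_vanishingSubmodule (hν : IsAsymptoticallyInvariant ν)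
    (c : Gᵈᵐᵃ) {s : Set Ω} (hs : MeasurableSet s) (x : X) :
    c • indicatorConstLp 1 hs (measure_ne_top P s) x -
        indicatorConstLp 1 hs (measure_ne_top P s) x ∈
      vanishingSubmodule fun n ↦ orbitAverage P (ν n) := by
  obtain ⟨g, rfl⟩ := DomMulAct.mk.surjective c
  refine mem_vanishingSubmodule_of_eventually_norm_le fun ε hε ↦ ?_
  have hε' : 0 < ε / (‖x‖ + 1) := by positivity
  filter_upwards [Metric.tendstoUniformlyOn_iff.1 (hν g) _ hε'] with n hn
  filter_upwards [orbitAverage_mk_smul_indicatorConstLp_sub (ν := ν n) g hs x] with ω hω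
  have hinv : |(ν n).real ((g * ·) ⁻¹' {h | h • ω ∈ s}) - (ν n).real {h | h • ω ∈ s}| <
      ε / (‖x‖ + 1) := by
    simpa only [Pi.zero_apply, dist_zero_left, Real.norm_eq_abs] using
      hn {h | h • ω ∈ s} (measurable_smul_const ω hs)
  rw [hω, norm_smul, Real.norm_eq_abs]
  calc _ ≤ ε / (‖x‖ + 1) * (‖x‖ + 1) := by
        gcongr
        exact (lt_add_one _).le
    _ = ε := div_mul_cancel₀ _ (by positivity)

lemma smul_sub_mem_vanishingSubmodule (hν : IsAsymptoticallyInvariant ν)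
    (hclosed : IsClosed (vanishingSubmodule fun n ↦ orbitAverage (X := X) P (ν n) :
      Set (Lp X 1 P))) (c : Gᵈᵐᵃ) (f : Lp X 1 P) :
    c • f - f ∈ vanishingSubmodule fun n ↦ orbitAverage P (ν n) := by
  induction f using Lp.induction ENNReal.one_ne_top with
  | indicatorConst x hs _ => exact smul_indicatorConstLp_sub_mem_vanishingSubmodule hν c hs x
  | add hf hg _ hf_mem hg_mem =>
    rw [smul_add, add_sub_add_comm]
    exact add_mem hf_mem hg_mem
  | isClosed => exact hclosed.preimage ((continuous_const_smul c).sub continuous_id)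

end Coboundary

variable (P) in
/-- The embedding `u ↦ u • x` of scalar `L²` into the Bochner space `L¹(P; X)`. -/
noncomputable def smulConstL (x : X) : Lp ℝ 2 P →L[ℝ] Lp X 1 P :=
  ((ContinuousLinearMap.lsmul ℝ ℝ).holderL P 2 2 1).flip (Lp.const 2 P x)

lemma coeFn_smulConstL (x : X) (u : Lp ℝ 2 P) : smulConstL P x u =ᵐ[P] fun ω ↦ u ω • x := by
  filter_upwards [(ContinuousLinearMap.lsmul ℝ ℝ).coeFn_holder (r := 1) u (Lp.const 2 P x),
    Lp.coeFn_const 2 P x] with ω hω hconst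
  refine hω.trans ?_
  rw [hconst]
  rfl

lemma smulConstL_smul (x : X) (c : Gᵈᵐᵃ) (u : Lp ℝ 2 P) :
    smulConstL P x (c • u) = c • smulConstL P x u := by
  refine Lp.ext ?_
  have hpres := measurePreserving_smul (DomMulAct.mk.symm c) P
  filter_upwards [coeFn_smulConstL x (c • u), DomMulAct.smul_Lp_ae_eq c u,
    DomMulAct.smul_Lp_ae_eq c (smulConstL P x u),
    hpres.quasiMeasurePreserving.ae (coeFn_smulConstL x u)] with ω hcu hu hcx hx
  rw [hcu, hu, hcx, hx]

lemma smulConstL_indicatorConstLp (x : X) {s : Set Ω} (hs : MeasurableSet s) :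
    smulConstL P x (indicatorConstLp 2 hs (measure_ne_top P s) 1) =
      indicatorConstLp 1 hs (measure_ne_top P s) x := by
  refine Lp.ext ?_
  filter_upwards [coeFn_smulConstL x (indicatorConstLp 2 hs (measure_ne_top P s) 1),
    indicatorConstLp_coeFn (μ := P) (p := 2) (c := (1 : ℝ)) (hs := hs)
      (hμs := measure_ne_top P s),
    indicatorConstLp_coeFn (μ := P) (p := 1) (c := x) (hs := hs)
      (hμs := measure_ne_top P s)] with ω hx hone hconst
  rw [hx, hone, hconst]
  by_cases hω : ω ∈ s <;> simp [hω]

lemma fixedSubmodule_sup_vanishingSubmodule_eq_top [CompleteSpace X] {ν : ℕ → Measure G}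
    [∀ n, IsProbabilityMeasure (ν n)] (hν : IsAsymptoticallyInvariant ν)
    (hclosed : IsClosed (vanishingSubmodule fun n ↦ orbitAverage (X := X) P (ν n) :
      Set (Lp X 1 P))) :
    fixedSubmodule ℝ Gᵈᵐᵃ (Lp X 1 P) ⊔ vanishingSubmodule (fun n ↦ orbitAverage P (ν n)) = ⊤ := by
  have hnorm : ∀ f ∈ fixedSubmodule ℝ Gᵈᵐᵃ (Lp X 1 P),
      ∀ g ∈ vanishingSubmodule fun n ↦ orbitAverage P (ν n), ‖f‖ ≤ ‖f + g‖ := by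
    intro f hf g hg
    have hlim : Tendsto (fun n ↦ orbitAverage P (ν n) (f + g)) atTop (𝓝 f) := by
      simp_rw [map_add, orbitAverage_eq_self hf]
      simpa using tendsto_const_nhds.add hg.2
    exact le_of_tendsto' hlim.norm fun n ↦ norm_orbitAverage_le _
  refine Submodule.eq_top_iff'.2 fun f ↦ ?_
  induction f using Lp.induction ENNReal.one_ne_top with
  | indicatorConst x hs _ =>
    rw [Lp.simpleFunc.coe_indicatorConst, ← smulConstL_indicatorConstLp]
    exact apply_mem_fixedSubmodule_sup hclosed (smul_sub_mem_vanishingSubmodule hν hclosed)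
      (smulConstL_smul x) _
  | add hf hg _ hf_mem hg_mem => exact add_mem hf_mem hg_mem
  | isClosed => exact isClosed_sup_of_norm_le_norm_add isClosed_fixedSubmodule hclosed hnorm

theorem WeakTypeMaximal.exists_tendsto_orbitAverage [CompleteSpace X] {ν : ℕ → Measure G}
    [∀ n, IsProbabilityMeasure (ν n)] {K : ℝ≥0∞} (hK : WeakTypeMaximal ν P K) (hKtop : K ≠ ∞)
    (hν : IsAsymptoticallyInvariant ν) (f : Lp X 1 P) :
    ∃ ψ ∈ fixedSubmodule ℝ Gᵈᵐᵃ (Lp X 1 P),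
      (∀ᵐ ω ∂P, Tendsto (fun n ↦ orbitAverage P (ν n) f ω) atTop (𝓝 (ψ ω))) ∧
      Tendsto (fun n ↦ orbitAverage P (ν n) f) atTop (𝓝 ψ) := by
  have hclosed := isClosed_vanishingSubmodule (M := 1)
    (A := fun n ↦ orbitAverage (X := X) P (ν n))
    (fun n f ↦ (norm_orbitAverage_le f).trans_eq (one_mul _).symm) hKtop
    hK.mul_measure_orbitAverage_le
  obtain ⟨ψ, hψ, κ, ⟨hκ_ae, hκ⟩, rfl⟩ := Submodule.mem_sup.1 <|
    (fixedSubmodule_sup_vanishingSubmodule_eq_top hν hclosed).ge (Submodule.mem_top (x := f))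
  have havg (n : ℕ) : orbitAverage P (ν n) (ψ + κ) = ψ + orbitAverage P (ν n) κ := by
    rw [map_add, orbitAverage_eq_self hψ]
  simp_rw [havg]
  refine ⟨ψ, hψ, ?_, by simpa only [add_zero] using hκ.const_add ψ⟩
  filter_upwards [hκ_ae, ae_all_iff.2 fun n ↦ Lp.coeFn_add ψ (orbitAverage P (ν n) κ)]
    with ω hω hadd
  simpa only [hadd, Pi.add_apply, add_zero] using hω.const_add (ψ ω)

end ErgodicDecomposition

theorem ergodic_theorem_banach_general {G : Type*} [Group G] [MeasurableSpace G]
    [MeasurableMul₂ G] [MeasurableInv G] (μ : Measure G) [SFinite μ] [μ.IsMulLeftInvariant]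
    (F : ℕ → Set G) (hFmeas : ∀ n, MeasurableSet (F n)) (hF0 : ∀ n, μ (F n) ≠ 0)
    (hFtop : ∀ n, μ (F n) ≠ ∞)
    (hFolner : ∀ g : G, Tendsto (fun n ↦ μ ((g • F n) ∆ F n) / μ (F n)) atTop (𝓝 0))
    {C : ℝ≥0∞} (hC : C ≠ ∞)
    (hTempered : ∀ n, μ (⋃ k ∈ Finset.range n, (F k)⁻¹ * F n) ≤ C * μ (F n))
    {Ω : Type*} [MeasurableSpace Ω] (P : Measure Ω) [IsFiniteMeasure P] (T : G → Ω → Ω)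
    (hTmul : ∀ g h : G, T (g * h) = T g ∘ T h) (hTone : T 1 = id)
    (hTmeas : Measurable fun p : G × Ω ↦ T p.1 p.2) (hTpres : ∀ g, MeasurePreserving (T g) P P)
    {X : Type*} [NormedAddCommGroup X] [NormedSpace ℝ X] [CompleteSpace X]
    (φ : Ω → X) (hφ : Integrable φ P) :
    ∃ ψ : Ω → X, Integrable ψ P ∧ (∀ g : G, ∀ᵐ ω ∂P, ψ (T g ω) = ψ ω) ∧
      (∀ᵐ ω ∂P, Tendsto (fun n ↦ (μ (F n)).toReal⁻¹ • ∫ g in F n, φ (T g ω) ∂μ)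
        atTop (𝓝 (ψ ω))) ∧
      Tendsto (fun n ↦ ∫ ω, ‖((μ (F n)).toReal⁻¹ • ∫ g in F n, φ (T g ω) ∂μ) - ψ ω‖ ∂P)
        atTop (𝓝 0) := by
  lift C to ℝ≥0 using hC
  let : MulAction G Ω :=
    { smul := T, one_smul := congrFun hTone, mul_smul := fun g h ↦ congrFun (hTmul g h) }
  have : MeasurableSMul₂ G Ω := ⟨hTmeas⟩
  have : SMulInvariantMeasure G Ω P :=
    ⟨fun g _ hs ↦ (hTpres g).measure_preimage hs.nullMeasurableSet⟩
  have (n : ℕ) : IsProbabilityMeasure μ[|F n] :=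
    ProbabilityTheory.cond_isProbabilityMeasure_of_finite (hF0 n) (hFtop n)
  have hinv := isAsymptoticallyInvariant_cond hFmeas hFtop hFolner
  have hmax : WeakTypeMaximal (fun n ↦ μ[|F n]) P (2 * (2 * (1 + C))) :=
    ((isTempered_cond hFmeas hTempered).weakTypeMaximal μ).transfer hFmeas hF0 hFtop hinv
  obtain ⟨ψ, hψ, hψ_ae, hψ_L1⟩ :=
    hmax.exists_tendsto_orbitAverage (by finiteness) hinv (hφ.toL1 φ)
  have havg (n : ℕ) : (orbitAverage P μ[|F n] (hφ.toL1 φ) : Ω → X) =ᵐ[P]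
      fun ω ↦ (μ (F n)).toReal⁻¹ • ∫ g in F n, φ (T g ω) ∂μ :=
    orbitAverage_cond_toL1 hφ
  refine ⟨ψ, L1.integrable_coeFn ψ, ae_smul_eq_of_mem_fixedSubmodule hψ, ?_, ?_⟩
  · filter_upwards [hψ_ae, ae_all_iff.2 havg] with ω hω havgω
    simpa only [havgω] using hω
  · refine (tendsto_iff_norm_sub_tendsto_zero.1 hψ_L1).congr fun n ↦ ?_
    rw [L1.norm_eq_integral_norm]
    refine integral_congr_ae ?_
    filter_upwards [Lp.coeFn_sub (orbitAverage P μ[|F n] (hφ.toL1 φ)) ψ, havg n] with ω hsub hω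
    rw [hsub, Pi.sub_apply, hω]

/-- pointwise and L¹ ergodic theorem for Bochner-integrable
functions with values in a separable Banach space, along a tempered Følner
sequence of a locally compact second countable group. -/
theorem ergodic_theorem_banach
    {G : Type*} [Group G] [TopologicalSpace G] [IsTopologicalGroup G]
    [LocallyCompactSpace G] [SecondCountableTopology G]
    [MeasurableSpace G] [BorelSpace G]
    (μ : Measure G) [μ.IsHaarMeasure]
    (F : ℕ → Set G) (hFmeas : ∀ n, MeasurableSet (F n))
    (hFpos : ∀ n, 0 < μ (F n)) (hFfin : ∀ n, μ (F n) < ∞)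
    (hFolner : ∀ g : G,
      Tendsto (fun n => μ ((g • F n) ∆ F n) / μ (F n)) atTop (𝓝 0))
    (hTempered : ∃ C : ℝ≥0∞, 0 < C ∧ C < ∞ ∧
      ∀ n : ℕ, μ (⋃ k ∈ Finset.range n, (F k)⁻¹ * F n) ≤ C * μ (F n))
    {Ω : Type*} [MeasurableSpace Ω] (P : Measure Ω) [IsProbabilityMeasure P]
    (T : G → Ω → Ω)
    (hTmul : ∀ g h : G, T (g * h) = T g ∘ T h) (hTone : T 1 = id)
    (hTmeas : Measurable fun p : G × Ω => T p.1 p.2)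
    (hTpres : ∀ g : G, MeasurePreserving (T g) P P)
    {X : Type*} [NormedAddCommGroup X] [NormedSpace ℝ X] [CompleteSpace X]
    [SecondCountableTopology X] [MeasurableSpace X] [BorelSpace X]
    (φ : Ω → X) (hφ : Integrable φ P) :
    ∃ ψ : Ω → X, Integrable ψ P ∧
      (∀ g : G, ∀ᵐ ω ∂P, ψ (T g ω) = ψ ω) ∧
      (∀ᵐ ω ∂P, Tendsto
        (fun n => (μ (F n)).toReal⁻¹ • ∫ g in F n, φ (T g ω) ∂μ)
        atTop (𝓝 (ψ ω))) ∧
      Tendsto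
        (fun n => ∫ ω, ‖((μ (F n)).toReal⁻¹ • ∫ g in F n, φ (T g ω) ∂μ) - ψ ω‖ ∂P)
        atTop (𝓝 0) := by
  obtain ⟨C, -, hC, hC_le⟩ := hTempered
  exact ergodic_theorem_banach_general μ F hFmeas (fun n ↦ (hFpos n).ne')
    (fun n ↦ (hFfin n).ne) hFolner hC.ne hC_le P T hTmul hTone hTmeas hTpres φ hφ
end

section
/- Let X be a complete separable metric space equipped with a Busemann midpoint map m. Let G be a compact topological group acting continuously on X by isometries and preserving midpoints (g·m(x,y) = m(g·x, g·y) for all g ∈ G and x, y ∈ X). Then the action has a fixed point: there exists p ∈ X with g·p = p for all g ∈ G. -/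
open Filter MeasureTheory Metric Topology
open scoped Pointwise symmDiff ENNReal

/-- A Busemann midpoint map on a metric space. -/
structure BusemannMidpoint (X : Type*) [MetricSpace X] where
  mid : X → X → X
  dist_left : ∀ x y, dist x (mid x y) = dist x y / 2
  dist_right : ∀ x y, dist (mid x y) y = dist x y / 2
  convex : ∀ x y x' y', dist (mid x y) (mid x' y') ≤ (dist x x' + dist y y') / 2

/-- A barycenter family on a metric space with a Busemann midpoint map. -/
structure BarycenterFamily (X : Type*) [MetricSpace X] (M : BusemannMidpoint X) where
  b : (n : ℕ) → (Fin n → X) → X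
  b_one : ∀ x : Fin 1 → X, b 1 x = x 0
  b_two : ∀ x : Fin 2 → X, b 2 x = M.mid (x 0) (x 1)
  perm_invariant : ∀ (n : ℕ) (σ : Equiv.Perm (Fin n)) (x : Fin n → X), b n (x ∘ σ) = b n x
  lipschitz : ∀ (n : ℕ) (x y : Fin n → X),
    dist (b n x) (b n y) ≤ (1 / n : ℝ) * ∑ i, dist (x i) (y i)
  recur : ∀ (n : ℕ), 1 ≤ n → ∀ x : Fin (n + 1) → X,
    b (n + 1) x = b (n + 1) (fun i => b n (x ∘ i.succAbove))

/-- The `k`-fold repetition of a tuple. -/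
def repTuple {X : Type*} {n : ℕ} (Q : Fin n → X) (k : ℕ) : Fin (n * k) → X :=
  fun i => Q ⟨i.val % n, Nat.mod_lt _ (by
    rcases Nat.eq_zero_or_pos n with h | h
    · exact absurd i.isLt (by simp [h])
    · exact h)⟩

/-!
A point whose orbit is totally bounded is moved to a point with half the displacement. Hall's
marriage theorem shows that every group element permutes a minimal net of the orbit up to twice the
mesh, so a permutation invariant, equivariant and nonexpansive barycenter of the net is almost
fixed; iterating gives a Cauchy sequence that converges to a fixed point.

Barycenters of `n` points come from repeatedly replacing each point of a tuple by the barycenter of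
the others. This contracts distances by the factor `1 / (n - 1)`, which is no contraction for
`n = 2`: there the pair `(x, y)` is iterated through `(m(x, y), m(y, x))`, since `m` need not be
symmetric, and the Goebel–Kirk inequality shows that the two points approach each other.
-/

section MinimalCovers

variable {X : Type*}

theorem isCover_image_compl_union_image [PseudoEMetricSpace X] {ι κ : Type*} {A : Set X}
    {ε : NNReal} {c : ι → X} {d : κ → X} (hc : IsCover ε A (Set.range c))
    (hd : IsCover ε A (Set.range d)) (S : Set ι) :
    IsCover ε A (c '' Sᶜ ∪ d '' {j | ∃ i ∈ S, edist (c i) (d j) ≤ 2 * ε}) := by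
  intro y hy
  obtain ⟨_, ⟨i, rfl⟩, hi : edist y (c i) ≤ ε⟩ := hc hy
  by_cases hiS : i ∈ S
  · obtain ⟨_, ⟨j, rfl⟩, hj : edist y (d j) ≤ ε⟩ := hd hy
    have hij : edist (c i) (d j) ≤ 2 * ε :=
      calc edist (c i) (d j) ≤ edist y (c i) + edist y (d j) := edist_triangle_left _ _ _
        _ ≤ ε + ε := add_le_add hi hj
        _ = 2 * ε := (two_mul _).symm
    exact ⟨d j, Or.inr ⟨j, ⟨i, hiS, hij⟩, rfl⟩, hj⟩
  · exact ⟨c i, Or.inl ⟨i, hiS, rfl⟩, hi⟩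

theorem exists_perm_edist_le_of_isCover [PseudoEMetricSpace X] {ι : Type*} [Fintype ι] {A : Set X}
    {ε : NNReal} {c d : ι → X} (hcA : Set.range c ⊆ A) (hdA : Set.range d ⊆ A)
    (hc : IsCover ε A (Set.range c)) (hd : IsCover ε A (Set.range d))
    (hmin : Fintype.card ι ≤ coveringNumber ε A) :
    ∃ σ : Equiv.Perm ι, ∀ i, edist (c i) (d (σ i)) ≤ 2 * ε := by
  classical
  have hall (S : Finset ι) :
      S.card ≤ (Finset.univ.filter fun j => ∃ i ∈ S, edist (c i) (d j) ≤ 2 * ε).card := by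
    set N := Finset.univ.filter fun j => ∃ i ∈ S, edist (c i) (d j) ≤ 2 * ε
    -- Exchanging the points of `S` in `c` for their neighbours in `d` gives another cover.
    have hcover : IsCover ε A ((Sᶜ.image c ∪ N.image d : Finset X) : Set X) := by
      simpa [N] using isCover_image_compl_union_image hc hd S
    have hsub : ((Sᶜ.image c ∪ N.image d : Finset X) : Set X) ⊆ A := by
      rw [Finset.coe_union, Finset.coe_image, Finset.coe_image]
      exact Set.union_subset ((Set.image_subset_range _ _).trans hcA)
        ((Set.image_subset_range _ _).trans hdA)
    have hcard : Fintype.card ι ≤ (Sᶜ.image c ∪ N.image d).card := by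
      have := hmin.trans (hcover.coveringNumber_le_encard hsub)
      rwa [Set.encard_coe_eq_coe_finsetCard, Nat.cast_le] at this
    have hle : (Sᶜ.image c ∪ N.image d).card ≤ Sᶜ.card + N.card :=
      (Finset.card_union_le _ _).trans (add_le_add Finset.card_image_le Finset.card_image_le)
    have hcompl := S.card_add_card_compl
    omega
  obtain ⟨f, hf, hfc⟩ := (Fintype.all_card_le_filter_rel_iff_exists_injective _).1 hall
  exact ⟨Equiv.ofBijective f (Finite.injective_iff_bijective.1 hf), hfc⟩

theorem exists_isCover_card_le_coveringNumber [PseudoEMetricSpace X] {A : Set X}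
    (hA : TotallyBounded A) {ε : NNReal} (hε : ε ≠ 0) :
    ∃ (n : ℕ) (c : Fin n → X), Set.range c ⊆ A ∧ IsCover ε A (Set.range c) ∧
      n ≤ coveringNumber ε A := by
  obtain ⟨N, hNA, hN, hNcover⟩ := exists_finite_isCover_of_totallyBounded hε hA
  obtain ⟨C, hCA, hC, hCcover, hCcard⟩ := exists_set_encard_eq_coveringNumber
    ((hNcover.coveringNumber_le_encard hNA).trans_lt hN.encard_lt_top).ne
  obtain ⟨n, c, hc, rfl⟩ := hC.fin_param
  exact ⟨n, c, hCA, hCcover, by simpa [hCcard] using hc.encard_range⟩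

theorem exists_net_almost_permuted [PseudoMetricSpace X] {G : Type*} [Group G] [MulAction G X]
    [IsIsometricSMul G X] {A : Set X} (hA : TotallyBounded A) (hinv : ∀ g : G, g • A = A)
    {ε : NNReal} (hε : ε ≠ 0) :
    ∃ (n : ℕ) (c : Fin n → X), Set.range c ⊆ A ∧ IsCover ε A (Set.range c) ∧
      ∀ g : G, ∃ σ : Equiv.Perm (Fin n), ∀ i, dist (g • c i) (c (σ i)) ≤ 2 * ε := by
  obtain ⟨n, c, hcA, hc, hn⟩ := exists_isCover_card_le_coveringNumber hA hε
  refine ⟨n, c, hcA, hc, fun g => ?_⟩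
  have hrange : Set.range (g • c) = g • Set.range c := Set.range_comp (g • ·) c
  have hgcA : Set.range (g • c) ⊆ A := by
    rw [hrange, ← hinv g]
    exact Set.smul_set_mono hcA
  have hgc : IsCover ε A (Set.range (g • c)) := by
    rw [hrange, ← hinv g]
    exact ((isometry_smul X g).isCover_image_iff _).2 hc
  obtain ⟨σ, hσ⟩ := exists_perm_edist_le_of_isCover hgcA hcA hgc hc (by simpa using hn)
  exact ⟨σ, fun i => by exact_mod_cast edist_le_coe.1 (hσ i)⟩

end MinimalCovers

section Averaging

variable {X : Type*} [MetricSpace X] {G : Type*} [SMul G X] {ι : Type*} [Fintype ι]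

/-- A barycenter of `ι`-indexed tuples, equivariant under `G`: constant tuples have the obvious
value, the order of the points does not matter, and each point has weight `1 / |ι|`. The Lipschitz
estimate is multiplied by `|ι|` to avoid division. -/
structure IsBarycenter (G : Type*) [SMul G X] (b : (ι → X) → X) : Prop where
  map_const : ∀ z, b (fun _ => z) = z
  map_comp_perm : ∀ (σ : Equiv.Perm ι) (x : ι → X), b (x ∘ σ) = b x
  map_smul : ∀ (g : G) (x : ι → X), b (g • x) = g • b x
  card_mul_dist_le : ∀ x y : ι → X, Fintype.card ι * dist (b x) (b y) ≤ ∑ i, dist (x i) (y i)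

/-- A symmetric averaging operator on `ι`-indexed tuples, to be iterated to produce barycenters. It
is nonexpansive for both the supremum distance (the one of `ι → X`) and the sum of the coordinate
distances. -/
structure IsAveraging (T : (ι → X) → ι → X) : Prop where
  map_const : ∀ z, T (fun _ => z) = fun _ => z
  map_comp_perm : ∀ (σ : Equiv.Perm ι) (x : ι → X), T (x ∘ σ) = T x ∘ σ
  dist_le : ∀ x y, dist (T x) (T y) ≤ dist x y
  sum_dist_le : ∀ x y, ∑ i, dist (T x i) (T y i) ≤ ∑ i, dist (x i) (y i)

namespace IsBarycenter

variable {b : (ι → X) → X}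

theorem dist_le [Nonempty ι] (hb : IsBarycenter G b) (x y : ι → X) :
    dist (b x) (b y) ≤ dist x y := by
  have hcard : (0 : ℝ) < Fintype.card ι := by exact_mod_cast Fintype.card_pos
  refine le_of_mul_le_mul_left ?_ hcard
  calc Fintype.card ι * dist (b x) (b y) ≤ ∑ i, dist (x i) (y i) := hb.card_mul_dist_le x y
    _ ≤ ∑ _i : ι, dist x y := Finset.sum_le_sum fun i _ => dist_le_pi_dist x y i
    _ = Fintype.card ι * dist x y := by simp

theorem dist_le_of_forall [Nonempty ι] (hb : IsBarycenter G b) {z : X} {x : ι → X} {r : ℝ}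
    (h : ∀ i, dist z (x i) ≤ r) : dist z (b x) ≤ r := by
  rw [← hb.map_const z]
  exact (hb.dist_le _ _).trans (dist_pi_le_iff'.2 h)

theorem dist_smul_le [Nonempty ι] (hb : IsBarycenter G b) {g : G} {x : ι → X}
    (σ : Equiv.Perm ι) {r : ℝ} (h : ∀ i, dist (g • x i) (x (σ i)) ≤ r) :
    dist (g • b x) (b x) ≤ r := by
  rw [← hb.map_smul, ← hb.map_comp_perm σ x]
  exact (hb.dist_le _ _).trans (dist_pi_le_iff'.2 h)

theorem totallyBounded_orbit [CompleteSpace X] {G : Type*} [Monoid G] [MulAction G X] [Nonempty ι]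
    (hb : IsBarycenter G b) {x : ι → X} (hx : ∀ i, TotallyBounded (MulAction.orbit G (x i))) :
    TotallyBounded (MulAction.orbit G (b x)) := by
  have hcompact : IsCompact (Set.univ.pi fun i => closure (MulAction.orbit G (x i))) :=
    isCompact_univ_pi fun i => (hx i).closure.isCompact_of_isClosed isClosed_closure
  have hcont : Continuous b := (LipschitzWith.mk_one hb.dist_le).continuous
  refine (hcompact.image hcont).totallyBounded.subset ?_
  rintro _ ⟨g, rfl⟩
  exact ⟨g • x, fun i _ => subset_closure (MulAction.mem_orbit _ g), hb.map_smul g x⟩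

end IsBarycenter

namespace IsAveraging

variable {T : (ι → X) → ι → X}

theorem iterate (hT : IsAveraging T) (k : ℕ) : IsAveraging T^[k] where
  map_const z := Function.iterate_fixed (hT.map_const z) k
  map_comp_perm σ := (show Function.Commute T (· ∘ σ) from hT.map_comp_perm σ).iterate_left k
  dist_le x y := by
    simpa using ((LipschitzWith.mk_one hT.dist_le).iterate k).dist_le_mul x y
  sum_dist_le x y := by
    induction k with
    | zero => exact le_rfl
    | succ k ih =>
      simp only [Function.iterate_succ_apply']
      exact (hT.sum_dist_le _ _).trans ih

theorem dist_const_le (hT : IsAveraging T) (x : ι → X) (z : X) :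
    dist (T x) (fun _ => z) ≤ dist x fun _ => z := by
  simpa only [hT.map_const] using hT.dist_le x fun _ => z

theorem isBounded_range_iterate (hT : IsAveraging T) (x : ι → X) (i : ι) :
    Bornology.IsBounded (Set.range fun k => T^[k] x i) := by
  refine (isBounded_closedBall (x := x i) (r := dist x fun _ => x i)).subset ?_
  rintro _ ⟨k, rfl⟩
  exact (dist_le_pi_dist _ (fun _ => x i) i).trans ((hT.iterate k).dist_const_le x (x i))

theorem exists_tendsto_iterate [CompleteSpace X] [Nonempty ι] (hT : IsAveraging T) {x : ι → X}
    (hx : ∀ i j, Tendsto (fun k => dist (T^[k] x i) (T^[k] x j)) atTop (𝓝 0)) :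
    ∃ z, Tendsto (fun k => T^[k] x) atTop (𝓝 fun _ => z) := by
  obtain ⟨i₀⟩ := ‹Nonempty ι›
  let diag (y : ι → X) : ι → X := fun _ => y i₀
  have hdiag : Tendsto (fun k => dist (T^[k] x) (diag (T^[k] x))) atTop (𝓝 0) := by
    refine squeeze_zero (fun _ => dist_nonneg) (fun k => ?_)
      (by simpa using tendsto_finsetSum Finset.univ fun i _ => hx i i₀)
    exact (dist_pi_le_iff (Finset.sum_nonneg fun _ _ => dist_nonneg)).2 fun i =>
      Finset.single_le_sum (f := fun i => dist (T^[k] x i) (T^[k] x i₀))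
        (fun _ _ => dist_nonneg) (Finset.mem_univ i)
  have hcauchy : CauchySeq fun k => T^[k] x := by
    refine cauchySeq_of_le_tendsto_0' (fun k => 2 * dist (T^[k] x) (diag (T^[k] x))) ?_
      (by simpa using hdiag.const_mul 2)
    intro k l hkl
    obtain ⟨m, rfl⟩ := Nat.exists_eq_add_of_le' hkl
    rw [Function.iterate_add_apply]
    have := (hT.iterate m).dist_const_le (T^[k] x) (T^[k] x i₀)
    linarith [dist_triangle_right (T^[k] x) (T^[m] (T^[k] x)) (diag (T^[k] x))]
  obtain ⟨y, hy⟩ := cauchySeq_tendsto_of_complete hcauchy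
  have hydiag : y = diag y := by
    have hcont : Continuous diag := by fun_prop
    exact dist_eq_zero.1 (tendsto_nhds_unique (hy.dist ((hcont.tendsto y).comp hy)) hdiag)
  exact ⟨y i₀, hydiag ▸ hy⟩

theorem isBarycenter_of_tendsto [ContinuousConstSMul G X] [Nonempty ι] (hT : IsAveraging T)
    (hsmul : ∀ (g : G) (x : ι → X), T (g • x) = g • T x) {b : (ι → X) → X}
    (hb : ∀ x, Tendsto (fun k => T^[k] x) atTop (𝓝 fun _ => b x)) :
    IsBarycenter G b := by
  have hbi (x : ι → X) (i : ι) : Tendsto (fun k => T^[k] x i) atTop (𝓝 (b x)) :=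
    tendsto_pi_nhds.1 (hb x) i
  obtain ⟨i₀⟩ := ‹Nonempty ι›
  constructor
  case map_const =>
    intro z
    refine tendsto_nhds_unique (hbi _ i₀) ?_
    simp only [(hT.iterate _).map_const, tendsto_const_nhds]
  case map_comp_perm =>
    intro σ x
    refine tendsto_nhds_unique (hbi _ i₀) ?_
    simp only [(hT.iterate _).map_comp_perm]
    exact hbi x (σ i₀)
  case map_smul =>
    intro g x
    refine tendsto_nhds_unique (hbi _ i₀) ?_
    have hcomm : Function.Commute T (g • ·) := hsmul g
    simp only [fun k => (hcomm.iterate_left k).eq x]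
    exact (hbi x i₀).const_smul g
  case card_mul_dist_le =>
    intro x y
    have hlim : Tendsto (fun k => ∑ i, dist (T^[k] x i) (T^[k] y i)) atTop
        (𝓝 (∑ _i : ι, dist (b x) (b y))) :=
      tendsto_finsetSum _ fun i _ => (hbi x i).dist (hbi y i)
    simpa using le_of_tendsto' hlim fun k => (hT.iterate k).sum_dist_le x y

theorem exists_isBarycenter [CompleteSpace X] [ContinuousConstSMul G X] [Nonempty ι]
    (hT : IsAveraging T) (hsmul : ∀ (g : G) (x : ι → X), T (g • x) = g • T x)
    (h : ∀ x i j, Tendsto (fun k => dist (T^[k] x i) (T^[k] x j)) atTop (𝓝 0)) :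
    ∃ b : (ι → X) → X, IsBarycenter G b := by
  choose b hb using fun x => hT.exists_tendsto_iterate (h x)
  exact ⟨b, hT.isBarycenter_of_tendsto hsmul hb⟩

end IsAveraging

end Averaging

namespace BusemannMidpoint

variable {X : Type*} [MetricSpace X] (M : BusemannMidpoint X)

theorem mid_self (z : X) : M.mid z z = z := by
  have h := M.dist_left z z
  rw [dist_self, zero_div] at h
  exact (dist_eq_zero.1 h).symm

theorem dist_mid_le (x y z : X) : dist (M.mid x y) z ≤ (dist x z + dist y z) / 2 := by
  simpa only [M.mid_self] using M.convex x y z z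

section GoebelKirk

variable {M} {x y : ℕ → X} (hx : ∀ n, x (n + 1) = M.mid (x n) (y n))
  (hy : ∀ n, dist (y n) (y (n + 1)) ≤ dist (x n) (y n) / 2)
include hx hy

theorem antitone_dist : Antitone fun n => dist (x n) (y n) := by
  refine antitone_nat_of_succ_le fun n => ?_
  have hxy : dist (x (n + 1)) (y n) = dist (x n) (y n) / 2 := by rw [hx, M.dist_right]
  linarith [hy n, dist_triangle (x (n + 1)) (y n) (y (n + 1))]

theorem dist_add_le (i n : ℕ) : dist (y i) (y (i + n)) ≤ n / 2 * dist (x i) (y i) := by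
  induction n with
  | zero => simp
  | succ n ih =>
    have hanti : dist (x (i + n)) (y (i + n)) ≤ dist (x i) (y i) :=
      antitone_dist hx hy (Nat.le_add_right i n)
    rw [← add_assoc]
    push_cast
    linarith [hy (i + n), dist_triangle (y i) (y (i + n)) (y (i + n + 1))]

theorem goebelKirk_inequality (n i : ℕ) : (1 + n / 2) * dist (x i) (y i) ≤
    dist (x i) (y (i + n)) + 2 ^ n * (dist (x i) (y i) - dist (x (i + n)) (y (i + n))) := by
  induction n generalizing i with
  | zero => simp
  | succ n ih =>
    have hih := ih (i + 1)
    rw [add_right_comm, add_assoc] at hih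
    have hmid : dist (x (i + 1)) (y (i + (n + 1))) ≤
        (dist (x i) (y (i + (n + 1))) + dist (y i) (y (i + (n + 1)))) / 2 :=
      hx i ▸ M.dist_mid_le _ _ _
    have hstep := dist_add_le hx hy i (n + 1)
    have hanti : dist (x (i + 1)) (y (i + 1)) ≤ dist (x i) (y i) :=
      antitone_dist hx hy (Nat.le_succ i)
    have hpow : (n : ℝ) + 2 ≤ 2 ^ (n + 1) := by
      exact_mod_cast (Nat.lt_two_pow_self : n + 1 < 2 ^ (n + 1))
    have hprod := mul_nonneg (sub_nonneg.2 hpow) (sub_nonneg.2 hanti)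
    push_cast at hstep ⊢
    rw [pow_succ] at hprod ⊢
    linarith

theorem tendsto_dist_zero (hbdd : Bornology.IsBounded (Set.range y)) :
    Tendsto (fun n => dist (x n) (y n)) atTop (𝓝 0) := by
  obtain ⟨B, hB⟩ := isBounded_range_iff.1 hbdd
  have hlim : Tendsto (fun n => dist (x n) (y n)) atTop (𝓝 (⨅ n, dist (x n) (y n))) :=
    tendsto_atTop_ciInf (antitone_dist hx hy) ⟨0, by rintro _ ⟨n, rfl⟩; exact dist_nonneg⟩
  set r := ⨅ n, dist (x n) (y n)
  have hr_nonneg : 0 ≤ r := Real.iInf_nonneg fun _ => dist_nonneg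
  have hr_le (n : ℕ) : n * r ≤ 2 * B := by
    have hgk (i : ℕ) : n / 2 * dist (x i) (y i) ≤
        B + 2 ^ n * (dist (x i) (y i) - dist (x (i + n)) (y (i + n))) := by
      linarith [goebelKirk_inequality hx hy n i, hB i (i + n),
        dist_triangle (x i) (y i) (y (i + n))]
    have := le_of_tendsto_of_tendsto' (hlim.const_mul (n / 2 : ℝ))
      (((hlim.sub ((tendsto_add_atTop_iff_nat n).2 hlim)).const_mul (2 ^ n)).const_add B) hgk
    rw [sub_self, mul_zero, add_zero] at this
    linarith
  have hr : r = 0 := by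
    by_contra hne
    obtain ⟨n, hn⟩ := exists_nat_gt (2 * B / r)
    rw [div_lt_iff₀ (hr_nonneg.lt_of_ne' hne)] at hn
    exact (hr_le n).not_gt hn
  rwa [hr] at hlim

end GoebelKirk

/-- The operator `(x, y) ↦ (m(x, y), m(y, x))` on pairs, whose iterates symmetrize `m`. -/
def midSwap (x : Fin 2 → X) : Fin 2 → X := fun i => M.mid (x i) (x i.rev)

theorem midSwap_smul {G : Type*} [SMul G X]
    (hmid : ∀ (g : G) (x y : X), g • M.mid x y = M.mid (g • x) (g • y)) (g : G) (x : Fin 2 → X) :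
    M.midSwap (g • x) = g • M.midSwap x :=
  funext fun _ => (hmid g _ _).symm

theorem isAveraging_midSwap : IsAveraging M.midSwap where
  map_const z := funext fun _ => M.mid_self z
  map_comp_perm σ x := by
    have hrev : ∀ (σ : Equiv.Perm (Fin 2)) (i : Fin 2), σ i.rev = (σ i).rev := by decide
    funext i
    simp only [midSwap, Function.comp_apply, hrev]
  dist_le x y := (dist_pi_le_iff dist_nonneg).2 fun i => by
    have := M.convex (x i) (x i.rev) (y i) (y i.rev)
    simp only [midSwap]
    linarith [dist_le_pi_dist x y i, dist_le_pi_dist x y i.rev]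
  sum_dist_le x y := by
    have hconvex (i : Fin 2) : dist (M.midSwap x i) (M.midSwap y i) ≤
        (dist (x i) (y i) + dist (x i.rev) (y i.rev)) / 2 := M.convex _ _ _ _
    have h₀ := hconvex 0
    have h₁ := hconvex 1
    simp only [Fin.sum_univ_two, show (0 : Fin 2).rev = 1 from rfl,
      show (1 : Fin 2).rev = 0 from rfl] at h₀ h₁ ⊢
    linarith

theorem tendsto_dist_iterate_midSwap (x : Fin 2 → X) (i j : Fin 2) :
    Tendsto (fun k => dist (M.midSwap^[k] x i) (M.midSwap^[k] x j)) atTop (𝓝 0) := by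
  have hsucc (k : ℕ) (i : Fin 2) :
      M.midSwap^[k + 1] x i = M.mid (M.midSwap^[k] x i) (M.midSwap^[k] x i.rev) := by
    rw [Function.iterate_succ_apply', midSwap]
  have h₀₁ : Tendsto (fun k => dist (M.midSwap^[k] x 0) (M.midSwap^[k] x 1)) atTop (𝓝 0) := by
    refine tendsto_dist_zero (M := M) (fun k => hsucc k 0) (fun k => ?_)
      (M.isAveraging_midSwap.isBounded_range_iterate x 1)
    rw [hsucc, M.dist_left, dist_comm]
    exact le_rfl
  fin_cases i <;> fin_cases j
  · simp
  · exact h₀₁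
  · exact h₀₁.congr fun _ => dist_comm _ _
  · simp

end BusemannMidpoint

section LeaveOneOut

theorem exists_perm_comp_succAbove {n : ℕ} (σ : Equiv.Perm (Fin (n + 1))) (i : Fin (n + 1)) :
    ∃ τ : Equiv.Perm (Fin n), σ ∘ i.succAbove = (σ i).succAbove ∘ τ := by
  let e : {j // j ≠ i} ≃ {j // j ≠ σ i} := σ.subtypeEquiv fun j => σ.injective.ne_iff.symm
  refine ⟨((finSuccAboveEquiv i).trans e).trans (finSuccAboveEquiv (σ i)).symm, ?_⟩
  funext k
  exact (congrArg Subtype.val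
    ((finSuccAboveEquiv (σ i)).apply_symm_apply (e (finSuccAboveEquiv i k)))).symm

variable {X : Type*} [MetricSpace X] {G : Type*} [SMul G X] {n : ℕ} {b : (Fin n → X) → X}

/-- The operator replacing each point of an `(n + 1)`-tuple by the `b`-barycenter of the others. -/
def leaveOneOut (b : (Fin n → X) → X) (x : Fin (n + 1) → X) : Fin (n + 1) → X :=
  fun i => b (i.removeNth x)

namespace IsBarycenter

theorem mul_dist_le (hb : IsBarycenter G b) (x y : Fin n → X) :
    n * dist (b x) (b y) ≤ ∑ i, dist (x i) (y i) := by
  simpa only [Fintype.card_fin] using hb.card_mul_dist_le x y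

theorem leaveOneOut_comp_perm (hb : IsBarycenter G b) (σ : Equiv.Perm (Fin (n + 1)))
    (x : Fin (n + 1) → X) : leaveOneOut b (x ∘ σ) = leaveOneOut b x ∘ σ := by
  funext i
  obtain ⟨τ, hτ⟩ := exists_perm_comp_succAbove σ i
  calc b (x ∘ σ ∘ i.succAbove) = b ((x ∘ (σ i).succAbove) ∘ τ) := by
        rw [hτ, Function.comp_assoc]
    _ = b (x ∘ (σ i).succAbove) := hb.map_comp_perm τ _

theorem leaveOneOut_smul (hb : IsBarycenter G b) (g : G) (x : Fin (n + 1) → X) :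
    leaveOneOut b (g • x) = g • leaveOneOut b x :=
  funext fun i => hb.map_smul g (i.removeNth x)

theorem mul_dist_leaveOneOut_le (hb : IsBarycenter G b) (x : Fin (n + 1) → X)
    (i j : Fin (n + 1)) :
    n * dist (leaveOneOut b x i) (leaveOneOut b x j) ≤ dist (x i) (x j) := by
  rcases eq_or_ne i j with rfl | hij
  · simp
  obtain ⟨k, hk⟩ := Fin.exists_succAbove_eq hij.symm
  have hswap : leaveOneOut b x j = leaveOneOut b (x ∘ Equiv.swap i j) i := by
    rw [hb.leaveOneOut_comp_perm, Function.comp_apply, Equiv.swap_apply_left]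
  calc n * dist (leaveOneOut b x i) (leaveOneOut b x j)
      ≤ ∑ l, dist (i.removeNth x l) (i.removeNth (x ∘ Equiv.swap i j) l) := by
        rw [hswap]
        exact hb.mul_dist_le _ _
    _ = dist (i.removeNth x k) (i.removeNth (x ∘ Equiv.swap i j) k) := by
        refine Finset.sum_eq_single_of_mem k (Finset.mem_univ k) fun l _ hl => ?_
        have hlj : i.succAbove l ≠ j := fun h =>
          hl (Fin.succAbove_right_injective (h.trans hk.symm))
        simp [Fin.removeNth, Equiv.swap_apply_of_ne_of_ne (Fin.succAbove_ne i l) hlj]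
    _ = dist (x i) (x j) := by
        simp [Fin.removeNth, hk, dist_comm]

theorem isAveraging_leaveOneOut [NeZero n] (hb : IsBarycenter G b) :
    IsAveraging (leaveOneOut b) where
  map_const z := funext fun _ => hb.map_const z
  map_comp_perm := hb.leaveOneOut_comp_perm
  dist_le x y := (dist_pi_le_iff dist_nonneg).2 fun i =>
    (hb.dist_le _ _).trans ((dist_pi_le_iff dist_nonneg).2 fun _ => dist_le_pi_dist x y _)
  sum_dist_le x y := by
    have hn : (0 : ℝ) < n := by exact_mod_cast NeZero.pos n
    have hi (i : Fin (n + 1)) : n * dist (leaveOneOut b x i) (leaveOneOut b y i) ≤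
        (∑ l, dist (x l) (y l)) - dist (x i) (y i) := by
      rw [Fin.sum_univ_succAbove _ i, add_sub_cancel_left]
      exact hb.mul_dist_le _ _
    refine le_of_mul_le_mul_left ?_ hn
    calc n * ∑ i, dist (leaveOneOut b x i) (leaveOneOut b y i)
        ≤ ∑ i : Fin (n + 1), ((∑ l, dist (x l) (y l)) - dist (x i) (y i)) := by
          rw [Finset.mul_sum]
          exact Finset.sum_le_sum fun i _ => hi i
      _ = n * ∑ i, dist (x i) (y i) := by
          rw [Finset.sum_sub_distrib]
          simp [add_mul]

theorem tendsto_dist_iterate_leaveOneOut (hb : IsBarycenter G b) (hn : 2 ≤ n)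
    (x : Fin (n + 1) → X) (i j : Fin (n + 1)) :
    Tendsto (fun k => dist ((leaveOneOut b)^[k] x i) ((leaveOneOut b)^[k] x j)) atTop (𝓝 0) := by
  have hpow (k : ℕ) :
      n ^ k * dist ((leaveOneOut b)^[k] x i) ((leaveOneOut b)^[k] x j) ≤ dist (x i) (x j) := by
    induction k with
    | zero => simp
    | succ k ih =>
      rw [Function.iterate_succ_apply', pow_succ, mul_assoc]
      exact (mul_le_mul_of_nonneg_left (hb.mul_dist_leaveOneOut_le _ i j) (by positivity)).trans ih
  have hn' : (1 : ℝ) < n := by exact_mod_cast hn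
  refine squeeze_zero (fun _ => dist_nonneg) (fun k => ?_)
    ((tendsto_const_nhds (x := dist (x i) (x j))).div_atTop
      (tendsto_pow_atTop_atTop_of_one_lt hn'))
  rw [le_div_iff₀' (by positivity)]
  exact hpow k

end IsBarycenter

end LeaveOneOut

theorem BusemannMidpoint.exists_isBarycenter {X : Type*} [MetricSpace X] [CompleteSpace X]
    (M : BusemannMidpoint X) {G : Type*} [SMul G X] [ContinuousConstSMul G X]
    (hmid : ∀ (g : G) (x y : X), g • M.mid x y = M.mid (g • x) (g • y)) (n : ℕ) [NeZero n] :
    ∃ b : (Fin n → X) → X, IsBarycenter G b := by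
  obtain rfl | hn : n = 1 ∨ 2 ≤ n := by have := NeZero.pos n; omega
  · exact ⟨fun x => x 0, fun _ => rfl, fun σ x => by simp [Subsingleton.elim (σ 0) 0],
      fun _ _ => rfl, fun _ _ => by simp⟩
  · induction n, hn using Nat.le_induction with
    | base =>
      exact M.isAveraging_midSwap.exists_isBarycenter (M.midSwap_smul hmid)
        M.tendsto_dist_iterate_midSwap
    | succ n hn ih =>
      have : NeZero n := ⟨by omega⟩
      obtain ⟨b, hb⟩ := ih
      exact hb.isAveraging_leaveOneOut.exists_isBarycenter hb.leaveOneOut_smul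
        (hb.tendsto_dist_iterate_leaveOneOut hn)

section FixedPoint

variable {X : Type*} [MetricSpace X] [CompleteSpace X] {G : Type*} [Group G] [MulAction G X]
  [IsIsometricSMul G X]

theorem BusemannMidpoint.exists_dist_smul_le_half (M : BusemannMidpoint X)
    (hmid : ∀ (g : G) (x y : X), g • M.mid x y = M.mid (g • x) (g • y)) {p : X}
    (hp : TotallyBounded (MulAction.orbit G p)) {D : ℝ} (hD : 0 < D)
    (hpD : ∀ g : G, dist p (g • p) ≤ D) :
    ∃ q, TotallyBounded (MulAction.orbit G q) ∧ (∀ g : G, dist q (g • q) ≤ D / 2) ∧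
      dist p q ≤ D := by
  lift D to NNReal using hD.le
  have hD4 : D / 4 ≠ 0 := (div_pos (by exact_mod_cast hD) four_pos).ne'
  obtain ⟨n, c, hc, hcover, hσ⟩ :=
    exists_net_almost_permuted hp (fun g : G => MulAction.smul_orbit g p) hD4
  have hcp (i : Fin n) : c i ∈ MulAction.orbit G p := hc ⟨i, rfl⟩
  obtain ⟨_, i₀, -⟩ := hcover.nonempty ⟨p, MulAction.mem_orbit_self p⟩
  have : NeZero n := ⟨by rintro rfl; exact i₀.elim0⟩
  obtain ⟨b, hb⟩ := M.exists_isBarycenter hmid n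
  refine ⟨b c, hb.totallyBounded_orbit fun i => ?_, fun g => ?_, hb.dist_le_of_forall fun i => ?_⟩
  · rwa [MulAction.orbit_eq_iff.2 (hcp i)]
  · obtain ⟨σ, hσ⟩ := hσ g
    rw [dist_comm]
    refine hb.dist_smul_le σ fun i => (hσ i).trans_eq ?_
    push_cast
    ring
  · obtain ⟨g, hg⟩ := hcp i
    exact hg ▸ hpD g

theorem compact_group_fixed_point_general (M : BusemannMidpoint X)
    (hmid : ∀ (g : G) (x y : X), g • M.mid x y = M.mid (g • x) (g • y)) {p₀ : X}
    (hp₀ : TotallyBounded (MulAction.orbit G p₀)) : ∃ p : X, ∀ g : G, g • p = p := by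
  obtain ⟨D, hD, hball⟩ := hp₀.isBounded.subset_closedBall_lt 0 p₀
  let P (k : ℕ) (p : X) : Prop :=
    TotallyBounded (MulAction.orbit G p) ∧ ∀ g : G, dist p (g • p) ≤ D / 2 ^ k
  have hP₀ : P 0 p₀ := ⟨hp₀, fun g => by
    simpa [dist_comm] using hball (MulAction.mem_orbit p₀ g)⟩
  have hstep (k : ℕ) (p : {p // P k p}) : ∃ q : {q // P (k + 1) q}, dist p.1 q.1 ≤ D / 2 ^ k := by
    obtain ⟨q, hq, hqD, hpq⟩ :=
      M.exists_dist_smul_le_half hmid p.2.1 (by positivity : 0 < D / 2 ^ k) p.2.2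
    exact ⟨⟨q, hq, fun g => (hqD g).trans_eq (by rw [div_div, pow_succ])⟩, hpq⟩
  choose next hnext using hstep
  let u (k : ℕ) : {p // P k p} := Nat.rec ⟨p₀, hP₀⟩ next k
  have hcauchy : CauchySeq fun k => (u k).1 :=
    cauchySeq_of_le_geometric_two (C := 2 * D) fun k => by
      rw [mul_div_cancel_left₀ _ two_ne_zero]
      exact hnext k (u k)
  obtain ⟨p, hp⟩ := cauchySeq_tendsto_of_complete hcauchy
  refine ⟨p, fun g => ?_⟩
  have hzero : Tendsto (fun k : ℕ => D / 2 ^ k) atTop (𝓝 0) :=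
    tendsto_const_nhds.div_atTop (tendsto_pow_atTop_atTop_of_one_lt one_lt_two)
  have hdist : dist p (g • p) ≤ 0 :=
    le_of_tendsto_of_tendsto' (hp.dist (hp.const_smul g)) hzero fun k => (u k).2.2 g
  exact (dist_le_zero.1 hdist).symm

end FixedPoint

/-- a compact group acting continuously by isometries (and
preserving midpoints) on a nonempty complete separable Busemann space has a
fixed point. -/
theorem compact_group_fixed_point {X : Type*} [MetricSpace X] [CompleteSpace X]
    [SecondCountableTopology X] [Nonempty X] (M : BusemannMidpoint X)
    {G : Type*} [Group G] [TopologicalSpace G] [IsTopologicalGroup G] [CompactSpace G]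
    [MulAction G X]
    (hcont : Continuous fun p : G × X => p.1 • p.2)
    (hiso : ∀ (g : G) (x y : X), dist (g • x) (g • y) = dist x y)
    (hmid : ∀ (g : G) (x y : X), g • M.mid x y = M.mid (g • x) (g • y)) :
    ∃ p : X, ∀ g : G, g • p = p := by
  have : IsIsometricSMul G X := ⟨fun g => Isometry.of_dist_eq (hiso g)⟩
  exact compact_group_fixed_point_general M hmid (p₀ := Classical.arbitrary X)
    (isCompact_range (hcont.comp (Continuous.prodMk_left _))).totallyBounded
end
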